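/- For all real q > 1 and 0 < c < ∞, there exists a surjective unital *-homomorphism φ from C_{q,c} onto the C*-algebra C(𝕋) of continuous complex-valued functions on the circle, whose kernel is isomorphic, as a (non-unital) C*-algebra via a *-algebra isomorphism, to the direct sum K(ℓ²(ℕ)) ⊕ K(ℓ²(ℕ)) of two copies of the algebra of compact operators on ℓ²(ℕ). Equivalently, there is a short exact sequence 0 → K ⊕ K → C(S²_{μc}) → C(S¹) → 0. -/

import Mathlib

set_option synthInstance.maxHeartbeats 1000000
set_option maxHeartbeats 1000000

noncomputable section

/-- The Hilbert space `ℓ²(ℤ) ⊗ ℓ²(ℕ) = ℓ²(ℤ × ℕ)`. -/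
abbrev HC : Type := lp (fun _ : ℤ × ℕ => ℂ) 2

/-- The standard orthonormal basis vectors `e_m ⊗ e_j` of `ℓ²(ℤ × ℕ)`. -/
def ec (m : ℤ) (j : ℕ) : HC := lp.single 2 (m, j) 1

/-- `IsXPair q c x` says that `x 0, x 1` are the operators
`x₁ = √c (S ⊗ α) + S* ⊗ γ` and `x₂ = -√c q⁻¹ (S ⊗ γ) + S* ⊗ α*` on `ℓ²(ℤ) ⊗ ℓ²(ℕ)`,
where `S` is the bilateral shift, `α e_j = (1 - q^{-2j})^{1/2} e_{j-1}` (`α e_0 = 0`) and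
`γ e_j = q^{-j} e_j`. -/
def IsXPair (q c : ℝ) (x : Fin 2 → (HC →L[ℂ] HC)) : Prop :=
  (∀ m : ℤ, x 0 (ec m 0) = ec (m - 1) 0) ∧
  (∀ (m : ℤ) (j : ℕ),
    x 0 (ec m (j + 1)) =
      (Real.sqrt c * Real.sqrt (1 - q ^ (-2 * ((j : ℤ) + 1)))) • ec (m + 1) j +
        (q ^ (-((j : ℤ) + 1))) • ec (m - 1) (j + 1)) ∧
  (∀ (m : ℤ) (j : ℕ),
    x 1 (ec m j) =
      (-Real.sqrt c * q⁻¹ * q ^ (-(j : ℤ))) • ec (m + 1) j +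
        Real.sqrt (1 - q ^ (-2 * ((j : ℤ) + 1))) • ec (m - 1) (j + 1))

/-- `C_{q,c}`: the unital C*-subalgebra of bounded operators on `ℓ²(ℤ) ⊗ ℓ²(ℕ)` generated
by `{x_i* x_j : i, j ∈ {1,2}}`; the concrete realization of the C*-algebra `C(S²_{μc})`
(`μ = q⁻¹`) of a nonstandard Podleś quantum 2-sphere, i.e. of `ℂP¹_{q,c}`. -/
def Cqc (x : Fin 2 → (HC →L[ℂ] HC)) : StarSubalgebra ℂ (HC →L[ℂ] HC) :=
  (StarAlgebra.adjoin ℂ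
    {a : HC →L[ℂ] HC | ∃ i j : Fin 2, a = star (x i) * x j}).topologicalClosure

/-- The Hilbert space ℓ²(ℕ). -/
abbrev Hnat : Type := lp (fun _ : ℕ => ℂ) 2
noncomputable section

/-- The compact operators on a complex Hilbert space `X`, as a non-unital star subalgebra
of the bounded operators (a C*-algebra).  By Schauder's theorem the condition that the
adjoint `star T` is also compact is automatic, so the carrier is exactly the set of
compact operators. -/
def compactOps (X : Type*) [NormedAddCommGroup X] [InnerProductSpace ℂ X]
    [CompleteSpace X] : NonUnitalStarSubalgebra ℂ (X →L[ℂ] X) where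
  carrier := {T | IsCompactOperator ⇑T ∧ IsCompactOperator ⇑(star T)}
  zero_mem' := by
    constructor <;> simpa using (isCompactOperator_zero (M₁ := X) (M₂ := X))
  add_mem' := by
    rintro a b ⟨ha1, ha2⟩ ⟨hb1, hb2⟩
    refine ⟨?_, ?_⟩
    · simpa [ContinuousLinearMap.coe_add] using ha1.add hb1
    · rw [star_add]; simpa [ContinuousLinearMap.coe_add] using ha2.add hb2
  mul_mem' := by
    rintro a b ⟨ha1, ha2⟩ ⟨hb1, hb2⟩
    refine ⟨?_, ?_⟩
    · simpa [ContinuousLinearMap.mul_def, ContinuousLinearMap.coe_comp] using ha1.comp_clm b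
    · rw [star_mul]
      simpa [ContinuousLinearMap.mul_def, ContinuousLinearMap.coe_comp] using
        hb2.comp_clm (star a)
  smul_mem' := by
    rintro c a ⟨ha1, ha2⟩
    refine ⟨?_, ?_⟩
    · simpa [ContinuousLinearMap.coe_smul] using ha1.smul c
    · rw [star_smul]; simpa [ContinuousLinearMap.coe_smul] using ha2.smul (star c)
  star_mem' := by
    rintro a ⟨ha1, ha2⟩
    exact ⟨ha2, by simpa [star_star] using ha1⟩

/-- The kernel of a unital *-homomorphism, as a non-unital star subalgebra (a closed
two-sided star-ideal) of the domain. -/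
def starAlgHomKer {A B : Type*} [Semiring A] [Algebra ℂ A] [StarRing A]
    [Semiring B] [Algebra ℂ B] [StarRing B] (φ : A →⋆ₐ[ℂ] B) :
    NonUnitalStarSubalgebra ℂ A where
  carrier := {x | φ x = 0}
  zero_mem' := by simp
  add_mem' := by
    intro a b ha hb
    simp only [Set.mem_setOf_eq] at *
    simp [map_add, ha, hb]
  mul_mem' := by
    intro a b ha hb
    simp only [Set.mem_setOf_eq] at *
    simp [map_mul, ha, hb]
  smul_mem' := by
    intro c a ha
    simp only [Set.mem_setOf_eq] at *
    simp [map_smul, ha]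
  star_mem' := by
    intro a ha
    simp only [Set.mem_setOf_eq] at *
    simp [map_star, ha]

section ShortcutInstances

-- Shortcut instances (all definitionally the canonical ones) to speed up elaboration.
instance : SMul ℂ ↥(compactOps Hnat) := inferInstance
instance : Add ↥(compactOps Hnat) := inferInstance
instance : Mul ↥(compactOps Hnat) := inferInstance
instance : Star ↥(compactOps Hnat) := inferInstance

variable {A B : Type*} [Semiring A] [Algebra ℂ A] [StarRing A]
    [Semiring B] [Algebra ℂ B] [StarRing B] (φ : A →⋆ₐ[ℂ] B)

instance : SMul ℂ ↥(starAlgHomKer φ) := inferInstance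
instance : Add ↥(starAlgHomKer φ) := inferInstance
instance : Mul ↥(starAlgHomKer φ) := inferInstance
instance : Star ↥(starAlgHomKer φ) := inferInstance

end ShortcutInstances

namespace Pod

set_option linter.unusedSectionVars false

open ContinuousLinearMap Filter Topology

/-- `ℓ²(ι)`. -/
abbrev L2 (ι : Type) : Type := lp (fun _ : ι => ℂ) 2

/-- standard basis vectors. -/
def bv {ι : Type} [DecidableEq ι] (i : ι) : L2 ι := lp.single 2 i 1

section basics
variable {ι κ τ : Type} [DecidableEq ι] [DecidableEq κ] [DecidableEq τ]
variable {H : Type} [NormedAddCommGroup H] [InnerProductSpace ℂ H] [CompleteSpace H]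

lemma mapp (S T : H →L[ℂ] H) (x : H) : (S * T) x = S (T x) := rfl

lemma bv_apply (i j : ι) : (bv i : L2 ι) j = if j = i then 1 else 0 := by
  simp [bv, Pi.single_apply]

lemma inner_bv (i : ι) (f : L2 ι) : inner ℂ (bv i) f = f i := by
  simp [bv, lp.inner_single_left]

lemma norm_bv (i : ι) : ‖(bv i : L2 ι)‖ = 1 := by
  simp [bv, lp.norm_single]

lemma orthonormal_bv : Orthonormal ℂ (bv : ι → L2 ι) := by
  rw [orthonormal_iff_ite]
  intro i j
  rw [inner_bv, bv_apply]

lemma clm_ext {S T : L2 ι →L[ℂ] H} (h : ∀ i, S (bv i) = T (bv i)) : S = T := by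
  refine lp.ext_continuousLinearMap (by simp) fun i => ?_
  ext
  simpa [bv] using h i

lemma l2_ext {f g : L2 ι} (h : ∀ i, f i = g i) : f = g := by
  ext i; exact h i

/-- isometry given by an orthonormal family -/
def ofON (v : ι → H) (hv : Orthonormal ℂ v) : L2 ι →L[ℂ] H :=
  (hv.orthogonalFamily.linearIsometry).toContinuousLinearMap

lemma ofON_bv (v : ι → H) (hv : Orthonormal ℂ v) (i : ι) : ofON v hv (bv i) = v i := by
  simp [ofON, bv, OrthogonalFamily.linearIsometry_apply_single]

lemma norm_ofON (v : ι → H) (hv : Orthonormal ℂ v) (x : L2 ι) : ‖ofON v hv x‖ = ‖x‖ := by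
  simp [ofON]

lemma adj_ofON (v : ι → H) (hv : Orthonormal ℂ v) :
    adjoint (ofON v hv) ∘L (ofON v hv) = 1 := by
  rw [← norm_map_iff_adjoint_comp_self]
  exact norm_ofON v hv

/-- isometry induced by an injection of index sets -/
def emb (g : ι → κ) (hg : Function.Injective g) : L2 ι →L[ℂ] L2 κ :=
  ofON (fun i => bv (g i)) (orthonormal_bv.comp g hg)

lemma emb_bv (g : ι → κ) (hg : Function.Injective g) (i : ι) : emb g hg (bv i) = bv (g i) :=
  ofON_bv _ _ _

lemma adj_emb (g : ι → κ) (hg : Function.Injective g) : adjoint (emb g hg) ∘L emb g hg = 1 :=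
  adj_ofON _ _

lemma adj_emb_apply (g : ι → κ) (hg : Function.Injective g) (f : L2 κ) (i : ι) :
    adjoint (emb g hg) f i = f (g i) := by
  rw [← inner_bv, adjoint_inner_right, emb_bv, inner_bv]

lemma emb_apply (g : ι → κ) (hg : Function.Injective g) (f : L2 ι) (i : ι) :
    emb g hg f (g i) = f i := by
  rw [← adj_emb_apply g hg]
  have := congrArg (fun T => T f i) (adj_emb g hg)
  simpa using this

lemma emb_apply_not (g : ι → κ) (hg : Function.Injective g) (f : L2 ι) (k : κ)
    (hk : ∀ i, g i ≠ k) : emb g hg f k = 0 := by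
  rw [← inner_bv, ← adjoint_inner_left]
  have : adjoint (emb g hg) (bv k) = 0 := by
    apply l2_ext
    intro i
    rw [adj_emb_apply, bv_apply, if_neg (hk i)]
    rfl
  rw [this, inner_zero_left]

lemma adj_emb_bv (g : ι → κ) (hg : Function.Injective g) (i : ι) :
    adjoint (emb g hg) (bv (g i)) = bv i := by
  rw [← emb_bv g hg]
  have := congrArg (fun T => T (bv i)) (adj_emb g hg)
  simpa using this

lemma adj_emb_bv_not (g : ι → κ) (hg : Function.Injective g) (k : κ) (hk : ∀ i, g i ≠ k) :
    adjoint (emb g hg) (bv k) = 0 := by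
  apply l2_ext
  intro i
  rw [adj_emb_apply, bv_apply, if_neg (hk i)]
  rfl

open Classical in
/-- diagonal operator -/
def dg (b : ι → ℂ) : L2 ι →L[ℂ] L2 ι :=
  if h : ∃ C, ∀ i, ‖b i‖ ≤ C then
    LinearMap.mkContinuous
      { toFun := fun f => ⟨fun i => b i * f i, by
          obtain ⟨C, hC⟩ := h
          refine Memℓp.mono' (g := fun i => (C : ℂ) • f i) ((lp.memℓp f).const_smul (C : ℂ)) ?_
          intro i
          rw [norm_mul, norm_smul]
          gcongr
          exact (hC i).trans (by simpa using le_abs_self C)⟩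
        map_add' := by
          intro f g; ext i; simp [mul_add]; rfl
        map_smul' := by
          intro a f; ext i; simp; ring } h.choose (by
      intro f
      have hC := h.choose_spec
      have h0 : (0:ℝ) ≤ h.choose ∨ IsEmpty ι := by
        rcases isEmpty_or_nonempty ι with hi | ⟨⟨i⟩⟩
        · exact Or.inr hi
        · exact Or.inl ((norm_nonneg _).trans (hC i))
      rcases h0 with h0 | h0
      · have : h.choose * ‖f‖ = ‖((h.choose : ℝ) : ℂ) • f‖ := by
          rw [norm_smul]; simp [abs_of_nonneg h0]
        rw [this]
        refine lp.norm_mono (by simp) ?_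
        intro i
        simp only [LinearMap.coe_mk, AddHom.coe_mk, lp.coeFn_smul, Pi.smul_apply, norm_mul,
          norm_smul]
        gcongr
        exact (hC i).trans (by simpa using le_abs_self _)
      · have : f = 0 := by ext i; exact (h0.false i).elim
        subst this
        simp only [map_zero, norm_zero, mul_zero, le_refl])
  else 0

lemma dg_apply {b : ι → ℂ} {C : ℝ} (h : ∀ i, ‖b i‖ ≤ C) (f : L2 ι) (i : ι) :
    dg b f i = b i * f i := by
  have h' : ∃ C, ∀ i, ‖b i‖ ≤ C := ⟨C, h⟩
  rw [dg, dif_pos h']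
  rfl

lemma dg_bv {b : ι → ℂ} {C : ℝ} (h : ∀ i, ‖b i‖ ≤ C) (i : ι) :
    dg b (bv i) = b i • bv i := by
  apply l2_ext
  intro j
  rw [dg_apply h, lp.coeFn_smul, Pi.smul_apply, bv_apply]
  by_cases hj : j = i
  · simp [hj]
  · simp [hj]

lemma norm_dg_le {b : ι → ℂ} {C : ℝ} (hC : 0 ≤ C) (h : ∀ i, ‖b i‖ ≤ C) : ‖dg b‖ ≤ C := by
  refine opNorm_le_bound _ hC fun f => ?_
  have : C * ‖f‖ = ‖((C : ℝ) : ℂ) • f‖ := by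
    rw [norm_smul]; simp [abs_of_nonneg hC]
  rw [this]
  refine lp.norm_mono (by simp) ?_
  intro i
  rw [dg_apply h]
  simp only [lp.coeFn_smul, Pi.smul_apply, norm_mul, norm_smul]
  gcongr
  exact (h i).trans (by simpa using le_abs_self _)

lemma star_dg {b : ι → ℂ} {C : ℝ} (h : ∀ i, ‖b i‖ ≤ C) :
    star (dg b) = dg (fun i => star (b i)) := by
  apply clm_ext
  intro i
  apply l2_ext
  intro j
  have h' : ∀ i, ‖star (b i)‖ ≤ C := by simpa using h
  rw [dg_bv h', star_eq_adjoint, ← inner_bv, adjoint_inner_right, dg_bv h, inner_smul_left,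
    inner_bv, lp.coeFn_smul, Pi.smul_apply, bv_apply]
  by_cases hj : j = i
  · simp [hj]
  · simp [hj]

lemma dg_mul {b d : ι → ℂ} {C D : ℝ} (h : ∀ i, ‖b i‖ ≤ C) (h' : ∀ i, ‖d i‖ ≤ D) :
    dg b * dg d = dg (fun i => b i * d i) := by
  apply clm_ext
  intro i
  have h2 : ∀ i, ‖b i * d i‖ ≤ C * D := by
    intro i
    rw [norm_mul]
    exact mul_le_mul (h i) (h' i) (norm_nonneg _) ((norm_nonneg _).trans (h i))
  rw [dg_bv h2, mapp, dg_bv h', map_smul, dg_bv h, smul_smul, mul_comm]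

lemma dg_sub {b d : ι → ℂ} {C D : ℝ} (h : ∀ i, ‖b i‖ ≤ C) (h' : ∀ i, ‖d i‖ ≤ D) :
    dg b - dg d = dg (fun i => b i - d i) := by
  apply clm_ext
  intro i
  have h2 : ∀ i, ‖b i - d i‖ ≤ C + D := by
    intro i
    exact (norm_sub_le _ _).trans (add_le_add (h i) (h' i))
  rw [dg_bv h2, sub_apply, dg_bv h', dg_bv h, sub_smul]

lemma dg_const (z : ℂ) : dg (fun _ : ι => z) = z • 1 := by
  apply clm_ext
  intro i
  rw [dg_bv (C := ‖z‖) (fun _ => le_rfl)]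
  simp

lemma dg_pow {b : ι → ℂ} {C : ℝ} (h : ∀ i, ‖b i‖ ≤ C) (k : ℕ) :
    dg b ^ k = dg (fun i => b i ^ k) := by
  induction k with
  | zero => simp [dg_const]
  | succ k ih =>
    have h' : ∀ i, ‖b i ^ k‖ ≤ C ^ k := by
      intro i; rw [norm_pow]; exact pow_le_pow_left₀ (norm_nonneg _) (h i) k
    rw [pow_succ, ih, dg_mul h' h]
    simp only [pow_succ]

/-- rank one operators -/
abbrev ro (x y : L2 ι) : L2 ι →L[ℂ] L2 ι := InnerProductSpace.rankOne ℂ x y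

lemma isCompact_ro (x y : L2 ι) : IsCompactOperator (ro x y) := by
  have h : IsCompactOperator (innerSL ℂ y : L2 ι →L[ℂ] ℂ) := by
    exact isCompactOperator_of_locallyCompactSpace_dom (innerSL ℂ y : L2 ι →L[ℂ] ℂ)
  exact h.clm_comp (ContinuousLinearMap.toSpanSingleton ℂ x)

end basics

lemma compact_sum {ι' : Type} (s : Finset ι') (T : ι' → (Hnat →L[ℂ] Hnat))
    (h : ∀ i ∈ s, IsCompactOperator (T i)) : IsCompactOperator (∑ i ∈ s, T i : Hnat →L[ℂ] Hnat) := by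
  classical
  induction s using Finset.induction_on with
  | empty => simpa using (isCompactOperator_zero (M₁ := Hnat) (M₂ := Hnat))
  | insert a s ha ih =>
    rw [Finset.sum_insert ha]
    exact (h a (by simp)).add (ih fun i hi => h i (by simp [hi]))

lemma bounded_of_tendsto {b : ℕ → ℂ} {z : ℂ} (h : Tendsto b atTop (𝓝 z)) :
    ∃ C, 0 ≤ C ∧ ∀ i, ‖b i‖ ≤ C := by
  obtain ⟨C, hC⟩ := (Metric.isBounded_range_of_tendsto b h).exists_norm_le
  refine ⟨C, (norm_nonneg _).trans (hC (b 0) ⟨0, rfl⟩), fun i => hC _ ⟨i, rfl⟩⟩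

lemma compact_dg {b : ℕ → ℂ} (h : Tendsto b atTop (𝓝 0)) : IsCompactOperator (dg b) := by
  obtain ⟨C, hC0, hC⟩ := bounded_of_tendsto h
  refine isCompactOperator_of_tendsto (l := atTop)
    (F := fun n : ℕ => ∑ i ∈ Finset.range n, b i • ro (bv i) (bv i)) ?_ ?_
  · rw [tendsto_iff_norm_sub_tendsto_zero, Metric.tendsto_atTop]
    intro ε hε
    obtain ⟨N, hN⟩ := Metric.tendsto_atTop.1 h (ε / 2) (by positivity)
    refine ⟨N, fun n hn => ?_⟩
    have e : (∑ i ∈ Finset.range n, b i • ro (bv i) (bv i)) - dg b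
        = dg (fun i => if i < n then 0 else - b i) := by
      apply clm_ext
      intro i
      rw [dg_bv (C := C) (fun i => by split_ifs <;> simp [hC0, hC]), sub_apply, dg_bv hC]
      simp only [sum_apply, smul_apply, InnerProductSpace.rankOne_apply, inner_bv, bv_apply]
      by_cases hi : i < n
      · simp [hi]
      · simp [hi]
    rw [e, dist_zero_right, norm_norm]
    refine lt_of_le_of_lt (norm_dg_le (C := ε / 2) (by positivity) ?_) (by linarith)
    intro i
    split_ifs with hi
    · simp; positivity
    · have := hN i (by omega)
      rw [dist_zero_right] at this
      simpa using this.le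
  · refine Eventually.of_forall fun n => compact_sum _ _ fun i _ => ?_
    exact (isCompact_ro _ _).smul (b i)

end Pod

namespace Pod

open ContinuousLinearMap Filter Topology

/-- unilateral shift -/
def V : Hnat →L[ℂ] Hnat := emb Nat.succ Nat.succ_injective

lemma V_bv (n : ℕ) : V (bv n) = bv (n + 1) := emb_bv _ _ _

lemma starV_apply (f : Hnat) (n : ℕ) : (star V) f n = f (n + 1) := adj_emb_apply _ _ _ _

lemma V_apply_succ (f : Hnat) (n : ℕ) : V f (n + 1) = f n := emb_apply _ _ _ _

lemma V_apply_zero (f : Hnat) : V f 0 = 0 := emb_apply_not _ _ _ _ (by simp)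

lemma starV_bv_succ (n : ℕ) : star V (bv (n + 1)) = bv n := adj_emb_bv _ _ _

lemma starV_bv_zero : star V (bv 0) = 0 := adj_emb_bv_not _ _ _ (by simp)

lemma starV_mul_V : star V * V = 1 := adj_emb _ _

lemma norm_starV_le : ‖star V‖ ≤ 1 := by
  rw [star_eq_adjoint, LinearIsometryEquiv.norm_map]
  refine opNorm_le_bound _ zero_le_one fun x => ?_
  rw [one_mul]
  have : ‖V x‖ = ‖x‖ := by unfold V emb; exact norm_ofON _ _ x
  exact this.le

lemma norm_starV_pow_le (n : ℕ) (x : Hnat) : ‖(star V ^ n) x‖ ≤ ‖x‖ := by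
  induction n with
  | zero => simp
  | succ n ih =>
    rw [pow_succ', mapp]
    refine (le_opNorm _ _).trans ?_
    calc _ ≤ 1 * ‖x‖ := mul_le_mul norm_starV_le ih (norm_nonneg _) zero_le_one
      _ = _ := one_mul _

lemma starV_pow_bv (n i : ℕ) (h : i < n) : (star V ^ n) (bv i) = 0 := by
  induction n generalizing i with
  | zero => omega
  | succ n ih =>
    rw [pow_succ, mapp]
    rcases i with _ | i
    · rw [starV_bv_zero, map_zero]
    · rw [starV_bv_succ]; exact ih i (by omega)

lemma tendsto_starV (x : Hnat) : Tendsto (fun n : ℕ => (star V ^ n) x) atTop (𝓝 0) := by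
  rw [Metric.tendsto_atTop]
  intro ε hε
  have h := lp.hasSum_single (p := 2) (by simp) x
  obtain ⟨s, hs⟩ := (Metric.tendsto_nhds.1 h ε hε).exists
  obtain ⟨N, hN⟩ := s.exists_nat_subset_range
  refine ⟨N, fun n hn => ?_⟩
  rw [dist_zero_right]
  have e : (star V ^ n) (∑ i ∈ s, lp.single 2 i (x i)) = 0 := by
    rw [map_sum]
    refine Finset.sum_eq_zero fun i hi => ?_
    have : (lp.single 2 i (x i) : Hnat) = x i • bv i := by
      rw [bv, ← lp.single_smul]; simp
    rw [this, map_smul, starV_pow_bv, smul_zero]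
    have := Finset.mem_range.1 (hN hi)
    omega
  calc ‖(star V ^ n) x‖ = ‖(star V ^ n) (x - ∑ i ∈ s, lp.single 2 i (x i))‖ := by
        rw [map_sub, e, sub_zero]
    _ ≤ ‖x - ∑ i ∈ s, lp.single 2 i (x i)‖ := norm_starV_pow_le _ _
    _ < ε := by
        rw [dist_comm, dist_eq_norm] at hs
        exact hs

lemma tendsto_starV_compact {K : Hnat →L[ℂ] Hnat} (hK : IsCompactOperator K) :
    Tendsto (fun n : ℕ => star V ^ n * K) atTop (𝓝 0) := by
  have hc : IsCompact (closure (K '' Metric.closedBall 0 1)) :=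
    hK.isCompact_closure_image_closedBall (f := K.toLinearMap) 1
  rw [Metric.tendsto_atTop]
  intro ε hε
  obtain ⟨t, ht, hcov⟩ := Metric.totallyBounded_iff.1 hc.totallyBounded (ε / 4) (by positivity)
  have : ∀ᶠ n : ℕ in atTop, ∀ y ∈ t, ‖(star V ^ n) y‖ < ε / 4 := by
    rw [ht.eventually_all]
    intro y _
    have := (tendsto_starV y).norm
    rw [norm_zero] at this
    exact this.eventually_lt_const (by positivity)
  obtain ⟨N, hN⟩ := eventually_atTop.1 this
  refine ⟨N, fun n hn => ?_⟩
  rw [dist_zero_right]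
  refine lt_of_le_of_lt (b := ε / 2) ?_ (by linarith)
  refine opNorm_le_of_unit_norm (by positivity) fun x hx => ?_
  have hm : K x ∈ closure (K '' Metric.closedBall 0 1) :=
    subset_closure ⟨x, by simp [hx], rfl⟩
  have := hcov hm
  simp only [Set.mem_iUnion, Metric.mem_ball, exists_prop] at this
  obtain ⟨y, hy, hd⟩ := this
  rw [mapp]
  have e : (star V ^ n) (K x) = (star V ^ n) (K x - y) + (star V ^ n) y := by
    rw [← map_add, sub_add_cancel]
  rw [e]
  refine (norm_add_le _ _).trans ?_
  have h1 := norm_starV_pow_le n (K x - y)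
  have h2 := hN n hn y hy
  rw [dist_eq_norm] at hd
  linarith

/-- `ℓ²(ℤ)` -/
abbrev E : Type := L2 ℤ

/-- bilateral shift -/
def S : E →L[ℂ] E := emb (fun n : ℤ => n + 1) (add_left_injective 1)

/-- inverse bilateral shift -/
def S' : E →L[ℂ] E := emb (fun n : ℤ => n - 1) (sub_left_injective)

/-- embedding -/
def jj : Hnat →L[ℂ] E := emb (fun n : ℕ => (n : ℤ)) Nat.cast_injective

lemma S_bv (n : ℤ) : S (bv n) = bv (n + 1) := emb_bv _ _ _
lemma S'_bv (n : ℤ) : S' (bv n) = bv (n - 1) := emb_bv _ _ _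
lemma jj_bv (n : ℕ) : jj (bv n) = bv (n : ℤ) := emb_bv _ _ _

lemma S_mul_S' : S * S' = 1 := by
  apply clm_ext; intro i
  rw [mapp, S'_bv, S_bv]; simp

lemma starS_mul_S : star S * S = 1 := adj_emb _ _

lemma starS_eq : star S = S' := by
  calc star S = star S * (S * S') := by rw [S_mul_S', mul_one]
    _ = S' := by rw [← mul_assoc, starS_mul_S, one_mul]

lemma S_unitary : S ∈ unitary (E →L[ℂ] E) := by
  rw [Unitary.mem_iff]
  exact ⟨starS_mul_S, by rw [starS_eq, S_mul_S']⟩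

lemma adj_jj : adjoint jj ∘L jj = 1 := adj_emb _ _

lemma jj_V : jj ∘L V = S ∘L jj := by
  apply clm_ext; intro i
  rw [comp_apply, comp_apply, V_bv, jj_bv, jj_bv, S_bv]
  norm_cast

/-- rotation unitary -/
def rot (w : Circle) : E →L[ℂ] E := dg (fun n : ℤ => ((w ^ n : Circle) : ℂ))

lemma rot_bv (w : Circle) (n : ℤ) : rot w (bv n) = ((w ^ n : Circle) : ℂ) • bv n :=
  dg_bv (C := 1) (fun _ => (Circle.norm_coe _).le) n

lemma rot_mul (w : Circle) : rot w * rot w⁻¹ = 1 := by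
  apply clm_ext; intro i
  rw [mapp, rot_bv, map_smul, rot_bv, smul_smul, ← Circle.coe_mul, ← mul_zpow]
  simp

/-- rotation as unit -/
def rotU (w : Circle) : (E →L[ℂ] E)ˣ where
  val := rot w
  inv := rot w⁻¹
  val_inv := rot_mul w
  inv_val := by simpa using rot_mul w⁻¹

lemma rot_conj (w : Circle) : rot w * S * rot w⁻¹ = (w : ℂ) • S := by
  apply clm_ext; intro i
  rw [mapp, mapp, rot_bv, map_smul, S_bv, map_smul, rot_bv, smul_smul, ← Circle.coe_mul,
    smul_apply, S_bv]
  congr 2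
  rw [inv_zpow, zpow_add, zpow_one]
  group
  rfl

lemma spec_circle (z : Circle) : (z : ℂ) ∈ spectrum ℂ S := by
  have : Nontrivial E := ⟨bv 0, 0, fun h => by
    have := norm_bv (0 : ℤ)
    rw [h, norm_zero] at this
    exact zero_ne_one this⟩
  obtain ⟨y, hy⟩ := spectrum.nonempty S
  have hy1 := spectrum.subset_circle_of_unitary S_unitary hy
  obtain ⟨y, rfl⟩ : ∃ y' : Circle, (y' : ℂ) = y :=
    ⟨⟨y, mem_sphere_zero_iff_norm.2 (by simpa using hy1)⟩, rfl⟩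
  have h2 : spectrum ℂ (((Circle.toUnits (z * y⁻¹))) • S)
      = spectrum ℂ S := by
    rw [← spectrum.units_conjugate (a := S)
      (u := rotU (z * y⁻¹))]
    congr 1
    exact (rot_conj _).symm
  rw [← h2, spectrum.unit_smul_eq_smul, Set.mem_smul_set]
  refine ⟨y, hy, ?_⟩
  show ((z * y⁻¹ : Circle) : ℂ) * y = z
  rw [← Circle.coe_mul, inv_mul_cancel_right]

/-- spectrum of `S` to circle -/
def specMap : C(spectrum ℂ S, Circle) where
  toFun z := ⟨z.1, mem_sphere_zero_iff_norm.2 (by simpa using spectrum.subset_circle_of_unitary S_unitary z.2)⟩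
  continuous_toFun := by
    exact Continuous.subtype_mk continuous_subtype_val _

instance S_normal : IsStarNormal S := by
  refine ⟨?_⟩
  rw [commute_iff_eq]
  rw [starS_mul_S, starS_eq, S_mul_S']

/-- multiplication operators -/
def M : C(Circle, ℂ) →⋆ₐ[ℂ] (E →L[ℂ] E) :=
  (cfcHom (R := ℂ) (a := S) S_normal).comp (specMap.compStarAlgHom' ℂ ℂ)

lemma M_inj (f : C(Circle, ℂ)) (h : M f = 0) : f = 0 := by
  have h1 : cfcHom (R := ℂ) (a := S) S_normal (f.comp specMap) = 0 := h
  have h2 : f.comp specMap = 0 := by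
    apply cfcHom_injective (R := ℂ) (a := S) S_normal
    rw [h1, map_zero]
  ext z
  have := DFunLike.congr_fun h2 ⟨z, spec_circle z⟩
  exact this

/-- coordinate function -/
def zc : C(Circle, ℂ) := ⟨fun z => z, continuous_subtype_val⟩

lemma M_zc : M zc = S := by
  have : zc.comp specMap = (ContinuousMap.id ℂ).restrict (spectrum ℂ S) := by
    ext z; rfl
  have h1 : M zc = cfcHom (R := ℂ) (a := S) S_normal (zc.comp specMap) := rfl
  rw [h1, this, cfcHom_id]

end Pod

namespace Pod

open ContinuousLinearMap Filter Topology

/-- operators on `ℓ²(ℕ)` -/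
abbrev BB : Type := Hnat →L[ℂ] Hnat

lemma hasSum_bv (x : Hnat) : HasSum (fun i => x i • (bv i : Hnat)) x := by
  have h := lp.hasSum_single (p := 2) (by simp) x
  convert h using 2 with i
  rw [bv, ← lp.single_smul]; simp

lemma closed_mem_of_bv (P : Submodule ℂ Hnat) (hP : IsClosed (P : Set Hnat))
    (h : ∀ i, bv i ∈ P) (x : Hnat) : x ∈ P := by
  refine hP.mem_of_tendsto (hasSum_bv x) (Eventually.of_forall fun s => ?_)
  exact P.sum_mem fun i _ => P.smul_mem _ (h i)

lemma comp_ro_star (T T' : BB) (x y : Hnat) : T * ro x y * star T' = ro (T x) (T' y) := by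
  ext1 z
  simp only [mapp, ro, InnerProductSpace.rankOne_apply, map_smul, star_eq_adjoint,
    adjoint_inner_right]

lemma V_pow_bv (n i : ℕ) : (V ^ n) (bv i) = bv (i + n) := by
  induction n with
  | zero => simp
  | succ n ih => rw [pow_succ', mapp, ih, V_bv, add_assoc]

lemma starV_pow_bv' (n i : ℕ) : (star V ^ n) (bv (i + n)) = bv i := by
  induction n with
  | zero => simp
  | succ n ih => rw [pow_succ, mapp, ← add_assoc, starV_bv_succ, ih]

lemma one_sub_V (N : ℕ) : (1 : BB) - V ^ N * star V ^ N = ∑ i ∈ Finset.range N, ro (bv i) (bv i) := by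
  apply clm_ext
  intro i
  simp only [sub_apply, mapp, sum_apply, InnerProductSpace.rankOne_apply, inner_bv, bv_apply]
  by_cases hi : i < N
  · rw [starV_pow_bv _ _ hi]; simp [hi]
  · obtain ⟨k, rfl⟩ := Nat.exists_eq_add_of_le' (not_lt.1 hi)
    rw [starV_pow_bv', V_pow_bv]; simp

lemma mul_ro (T : BB) (x y : Hnat) : T * ro x y = ro (T x) y := by
  ext1 z
  simp only [mapp, ro, InnerProductSpace.rankOne_apply, map_smul]

lemma tendsto_trunc {K : BB} (hK : IsCompactOperator ⇑(star K)) :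
    Tendsto (fun N : ℕ => ∑ i ∈ Finset.range N, ro (K (bv i)) (bv i)) atTop (𝓝 K) := by
  have e : ∀ N : ℕ, ∑ i ∈ Finset.range N, ro (K (bv i)) (bv i)
      = K - star (star V ^ N * star K) * star V ^ N := by
    intro N
    have : ∑ i ∈ Finset.range N, ro (K (bv i)) (bv i)
      = K * ∑ i ∈ Finset.range N, ro (bv i) (bv i) := by
      rw [Finset.mul_sum]; simp only [mul_ro]
    rw [this, ← one_sub_V, mul_sub, mul_one, star_mul, star_star, star_pow, star_star, mul_assoc]
  simp only [e]
  have h0 : Tendsto (fun N : ℕ => star (star V ^ N * star K) * star V ^ N) atTop (𝓝 0) := by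
    have h1 := (tendsto_starV_compact hK).norm
    rw [norm_zero] at h1
    refine squeeze_zero_norm (fun N => ?_) h1
    refine opNorm_le_bound _ (norm_nonneg _) fun x => ?_
    rw [mapp]
    refine (le_opNorm _ _).trans ?_
    have : ‖star (star V ^ N * star K)‖ = ‖star V ^ N * star K‖ := by
      rw [star_eq_adjoint (star V ^ N * star K), LinearIsometryEquiv.norm_map]
    rw [this]
    gcongr
    exact norm_starV_pow_le _ _
  simpa using tendsto_const_nhds.sub h0

lemma compact_mem (P : Submodule ℂ BB) (hP : IsClosed (P : Set BB)) (B : BB) (b : ℕ → ℂ)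
    (hB : ∀ n, B (bv n) = b n • bv (n + 1)) (hb : ∀ n, b n ≠ 0)
    (hl : ∀ T ∈ P, B * T ∈ P) (hr : ∀ T ∈ P, T * star B ∈ P)
    (h0 : ro (bv 0) (bv 0) ∈ P) (K : BB) (hK : IsCompactOperator ⇑(star K)) : K ∈ P := by
  have h1 : ∀ m, ro (bv m) (bv 0) ∈ P := by
    intro m
    induction m with
    | zero => exact h0
    | succ m ih =>
      have := hl _ ih
      rw [mul_ro, hB] at this
      have h2 := P.smul_mem (b m)⁻¹ this
      have h3 : (b m)⁻¹ • ro (b m • bv (m + 1)) (bv 0) = ro (bv (m + 1)) (bv 0) := by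
        simp only [ro, map_smul, smul_apply, smul_smul, inv_mul_cancel₀ (hb m), one_smul]
      rwa [h3] at h2
  have h2 : ∀ m n, ro (bv m) (bv n) ∈ P := by
    intro m n
    induction n with
    | zero => exact h1 m
    | succ n ih =>
      have := hr _ ih
      have e : ro (bv m) (bv n) * star B = star (b n) • ro (bv m) (bv (n + 1)) := by
        have := comp_ro_star 1 B (bv m) (bv n)
        rw [one_mul] at this
        rw [this, hB]
        ext1 z
        simp [ro, inner_smul_left, smul_smul]
      rw [e] at this
      have h2 := P.smul_mem (star (b n))⁻¹ this
      rwa [smul_smul, inv_mul_cancel₀ (by simpa using hb n), one_smul] at h2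
  have h3 : ∀ x n, ro x (bv n) ∈ P := by
    intro x n
    let L : Hnat →L[ℂ] BB := (InnerProductSpace.rankOne ℂ (E := Hnat) (F := Hnat)).flip (bv n)
    exact closed_mem_of_bv (P.comap L.toLinearMap) (hP.preimage L.continuous) (fun i => h2 i n) x
  refine hP.mem_of_tendsto (tendsto_trunc hK) (Eventually.of_forall fun N => ?_)
  exact P.sum_mem fun i _ => h3 _ _

lemma tendsto_dg_pow {d : ℕ → ℂ} {ρ : ℝ} (hρ0 : 0 ≤ ρ) (hρ : ρ < 1)
    (h : ∀ n, d n = 1 ∨ ‖d n‖ ≤ ρ) :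
    Tendsto (fun k : ℕ => dg d ^ k) atTop (𝓝 (dg (fun n => if d n = 1 then (1 : ℂ) else 0))) := by
  have hd : ∀ n, ‖d n‖ ≤ 1 := by
    intro n
    rcases h n with h | h
    · simp [h]
    · linarith
  rw [tendsto_iff_norm_sub_tendsto_zero]
  refine squeeze_zero (fun _ => norm_nonneg _) (fun k => ?_)
    (tendsto_pow_atTop_nhds_zero_of_lt_one hρ0 hρ)
  rw [dg_pow hd, dg_sub (C := 1) (D := 1)]
  · refine norm_dg_le (by positivity) fun n => ?_
    by_cases h1 : d n = 1
    · simp [h1]; positivity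
    · simp only [h1, if_false, sub_zero, norm_pow]
      exact pow_le_pow_left₀ (norm_nonneg _) ((h n).resolve_left h1) k
  · intro n; rw [norm_pow]; exact pow_le_one₀ (norm_nonneg _) (hd n)
  · intro n; split_ifs <;> simp

lemma dg_ite_zero {d : ℕ → ℂ} (h0 : d 0 = 1) (h : ∀ n, n ≠ 0 → d n ≠ 1) :
    dg (fun n => if d n = 1 then (1 : ℂ) else 0) = ro (bv 0) (bv 0) := by
  apply clm_ext
  intro i
  rw [dg_bv (C := 1) (fun n => by split_ifs <;> simp)]
  simp only [ro, InnerProductSpace.rankOne_apply, inner_bv, bv_apply]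
  by_cases hi : i = 0
  · simp [hi, h0]
  · simp [h i hi, Ne.symm hi]

lemma dg_ite_none {d : ℕ → ℂ} (h : ∀ n, d n ≠ 1) :
    dg (fun n => if d n = 1 then (1 : ℂ) else 0) = 0 := by
  apply clm_ext
  intro i
  rw [dg_bv (C := 1) (fun n => by split_ifs <;> simp)]
  simp [h i]

/-- All pairs of compacts belong to the subalgebra. -/
lemma pair_mem (A : StarSubalgebra ℂ (BB × BB)) (hA : IsClosed (A : Set (BB × BB)))
    (d d' b b' : ℕ → ℂ) (B B' : BB) (ρ : ℝ) (hρ0 : 0 ≤ ρ) (hρ : ρ < 1)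
    (hd0 : d 0 = 1) (hd : ∀ n, n ≠ 0 → ‖d n‖ ≤ ρ) (hd' : ∀ n, ‖d' n‖ ≤ ρ)
    (hd1' : d' 0 = 0) (hdd' : ∀ n, n ≠ 0 → ‖1 - d' n‖ ≤ ρ) (hdd : ∀ n, ‖1 - d n‖ ≤ ρ)
    (hX : (dg d, dg d') ∈ A) (hBm : (B, B') ∈ A)
    (hB : ∀ n, B (bv n) = b n • bv (n + 1)) (hb : ∀ n, b n ≠ 0)
    (hB' : ∀ n, B' (bv n) = b' n • bv (n + 1)) (hb' : ∀ n, b' n ≠ 0)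
    (K K' : BB) (hK : IsCompactOperator ⇑(star K)) (hK' : IsCompactOperator ⇑(star K')) :
    (K, K') ∈ A := by
  have hne : ∀ z : ℂ, ‖z‖ ≤ ρ → z ≠ 1 := by
    rintro z hz rfl
    rw [norm_one] at hz; linarith
  have hdb : ∀ n, ‖d n‖ ≤ 1 := by
    intro n
    by_cases hn : n = 0
    · simp [hn, hd0]
    · have := hd n hn; linarith
  have hdb' : ∀ n, ‖d' n‖ ≤ 1 := fun n => (hd' n).trans hρ.le
  have e1 : (ro (bv 0) (bv 0), (0 : BB)) ∈ A := by
    have t1 := tendsto_dg_pow hρ0 hρ (d := d) (fun n => by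
      by_cases hn : n = 0
      · left; rw [hn, hd0]
      · right; exact hd n hn)
    have t2 := tendsto_dg_pow hρ0 hρ (d := d') (fun n => Or.inr (hd' n))
    rw [dg_ite_zero hd0 (fun n hn => hne _ (hd n hn))] at t1
    rw [dg_ite_none (fun n => hne _ (hd' n))] at t2
    refine hA.mem_of_tendsto (t1.prodMk_nhds t2) (Eventually.of_forall fun k => ?_)
    exact pow_mem hX k
  have e2 : ((0 : BB), ro (bv 0) (bv 0)) ∈ A := by
    have t1 := tendsto_dg_pow hρ0 hρ (d := fun n => 1 - d n) (fun n => Or.inr (hdd n))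
    have t2 := tendsto_dg_pow hρ0 hρ (d := fun n => 1 - d' n) (fun n => by
      by_cases hn : n = 0
      · left; simp [hn, hd1']
      · right; exact hdd' n hn)
    rw [dg_ite_none (fun n => hne _ (hdd n))] at t1
    rw [dg_ite_zero (d := fun n => 1 - d' n) (by simp [hd1']) (fun n hn => hne _ (hdd' n hn))] at t2
    refine hA.mem_of_tendsto (t1.prodMk_nhds t2) (Eventually.of_forall fun k => ?_)
    have h1 : (1 - (dg d, dg d')) ∈ A := sub_mem (one_mem A) hX
    have h2 : (1 - (dg d, dg d')) = (dg (fun n => 1 - d n), dg (fun n => 1 - d' n)) := by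
      have := dg_sub (b := fun _ : ℕ => (1 : ℂ)) (d := d) (C := 1) (by simp) hdb
      have h' := dg_sub (b := fun _ : ℕ => (1 : ℂ)) (d := d') (C := 1) (by simp) hdb'
      rw [← this, ← h', dg_const, one_smul]
      rfl
    rw [h2] at h1
    exact pow_mem h1 k
  have k1 : (K, (0 : BB)) ∈ A := by
    let P : Submodule ℂ BB := (Subalgebra.toSubmodule A.toSubalgebra).comap (LinearMap.inl ℂ BB BB)
    refine compact_mem P (hA.preimage (by exact continuous_id.prodMk continuous_const))
      B b hB hb ?_ ?_ e1 K hK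
    · intro T hT
      have := mul_mem hBm (show (T, (0 : BB)) ∈ A from hT)
      rw [Prod.mk_mul_mk, mul_zero] at this
      exact this
    · intro T hT
      have := mul_mem (show (T, (0 : BB)) ∈ A from hT) (star_mem hBm)
      rw [Prod.star_def, Prod.mk_mul_mk, zero_mul] at this
      exact this
  have k2 : ((0 : BB), K') ∈ A := by
    let P : Submodule ℂ BB := (Subalgebra.toSubmodule A.toSubalgebra).comap (LinearMap.inr ℂ BB BB)
    refine compact_mem P (hA.preimage (by exact continuous_const.prodMk continuous_id))
      B' b' hB' hb' ?_ ?_ e2 K' hK'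
    · intro T hT
      have := mul_mem hBm (show ((0 : BB), T) ∈ A from hT)
      rw [Prod.mk_mul_mk, mul_zero] at this
      exact this
    · intro T hT
      have := mul_mem (show ((0 : BB), T) ∈ A from hT) (star_mem hBm)
      rw [Prod.star_def, Prod.mk_mul_mk, zero_mul] at this
      exact this
  have := add_mem k1 k2
  simpa using this

end Pod

namespace Pod

open ContinuousLinearMap Filter Topology

lemma sw (A : StarSubalgebra ℂ C(Circle, ℂ)) (hA : IsClosed (A : Set C(Circle, ℂ)))
    (hz : zc ∈ A) (f : C(Circle, ℂ)) : f ∈ A := by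
  have h : A.topologicalClosure = ⊤ := by
    apply ContinuousMap.starSubalgebra_topologicalClosure_eq_top_of_separatesPoints
    intro x y hxy
    refine ⟨zc, ⟨zc, hz, rfl⟩, fun h => hxy (Subtype.ext h)⟩
  have h2 : f ∈ A.topologicalClosure := by rw [h]; trivial
  have h3 : f ∈ closure (A : Set C(Circle, ℂ)) := h2
  rwa [hA.closure_eq] at h3

lemma mem_compactOps {T : BB} :
    T ∈ compactOps Hnat ↔ IsCompactOperator ⇑T ∧ IsCompactOperator ⇑(star T) := Iff.rfl

lemma compactOps_mul_left (T : BB) {K : BB} (hK : K ∈ compactOps Hnat) :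
    T * K ∈ compactOps Hnat := by
  refine ⟨hK.1.clm_comp T, ?_⟩
  rw [star_mul]
  exact hK.2.comp_clm (star T)

lemma compactOps_mul_right (T : BB) {K : BB} (hK : K ∈ compactOps Hnat) :
    K * T ∈ compactOps Hnat := by
  refine ⟨hK.1.comp_clm T, ?_⟩
  rw [star_mul]
  exact hK.2.clm_comp (star T)

lemma isClosed_compact {X Y : Type} [NormedAddCommGroup X] [NormedSpace ℂ X]
    [NormedAddCommGroup Y] [NormedSpace ℂ Y] [CompleteSpace Y] :
    IsClosed {T : X →L[ℂ] Y | IsCompactOperator ⇑T} :=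
  isClosed_setOfPred_isCompactOperator

lemma isClosed_compactOps : IsClosed {T : BB | T ∈ compactOps Hnat} := by
  have h : {T : BB | T ∈ compactOps Hnat} = {T : BB | IsCompactOperator ⇑T} ∩
    (star ⁻¹' {T : BB | IsCompactOperator ⇑T}) := rfl
  rw [h]
  exact isClosed_compact.inter (isClosed_compact.preimage continuous_star)

/-- Toeplitz operator -/
def toep (f : C(Circle, ℂ)) : BB := adjoint jj ∘L M f ∘L jj

/-- Hankel operator -/
def hank (f : C(Circle, ℂ)) : Hnat →L[ℂ] E := M f ∘L jj - jj ∘L toep f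

lemma M_cont : Continuous M := by
  refine (NonUnitalStarAlgHom.isometry M ?_).continuous
  intro f g h
  have := M_inj (f - g) (by rw [map_sub, h, sub_self])
  exact sub_eq_zero.1 this

lemma toep_cont : Continuous toep := by
  unfold toep
  exact continuous_const.clm_comp (M_cont.clm_comp continuous_const)

lemma hank_cont : Continuous hank := by
  unfold hank
  exact (M_cont.clm_comp continuous_const).sub (continuous_const.clm_comp toep_cont)

lemma star_toep (f : C(Circle, ℂ)) : star (toep f) = toep (star f) := by
  simp only [toep, star_eq_adjoint, adjoint_comp, adjoint_adjoint, map_star]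
  rfl

lemma toep_add (f g : C(Circle, ℂ)) : toep (f + g) = toep f + toep g := by
  ext1 x; simp [toep]

lemma toep_smul (z : ℂ) (f : C(Circle, ℂ)) : toep (z • f) = z • toep f := by
  ext1 x; simp [toep]

lemma adj_jj_apply (x : Hnat) : adjoint jj (jj x) = x :=
  congrArg (fun T : BB => T x) adj_jj

lemma toep_one : toep 1 = 1 := by
  ext1 x; simp [toep, adj_jj_apply]

lemma hank_mul (f g : C(Circle, ℂ)) : hank (f * g) = hank f ∘L toep g +
    (M f - jj ∘L adjoint jj ∘L M f) ∘L hank g := by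
  ext1 x
  simp [toep, hank, mapp]

lemma toep_mul (f g : C(Circle, ℂ)) : toep f * toep g - toep (f * g) =
    -((adjoint jj ∘L M f) ∘L hank g) := by
  ext1 x
  simp [toep, hank, mapp]

lemma hank_zc : hank zc = 0 := by
  rw [hank, toep, M_zc, ← jj_V]
  ext1 x
  simp [adj_jj_apply]

lemma hank_star_zc : IsCompactOperator (hank (star zc)) := by
  have h1 : hank (star zc) ∘L V = 0 := by
    rw [hank, toep, map_star, M_zc, sub_comp, comp_assoc, comp_assoc, comp_assoc, comp_assoc, jj_V]
    have h : star S ∘L S ∘L jj = jj := by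
      rw [← comp_assoc]
      show (star S * S) ∘L jj = jj
      rw [starS_mul_S]; rfl
    rw [h, adj_jj]
    ext1 x; simp
  have h2 : hank (star zc) = hank (star zc) ∘L (1 - V * star V) := by
    have : hank (star zc) ∘L (V * star V) = 0 := by
      show hank (star zc) ∘L (V ∘L star V) = 0
      rw [← comp_assoc, h1, zero_comp]
    rw [comp_sub, this, sub_zero]; rfl
  rw [h2]
  have h3 : IsCompactOperator ⇑(1 - V * star V : BB) := by
    have := one_sub_V 1
    rw [pow_one, pow_one] at this
    rw [this]
    exact compact_sum _ _ fun i _ => isCompact_ro _ _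
  exact h3.clm_comp (hank (star zc))

lemma hank_compact (f : C(Circle, ℂ)) : IsCompactOperator (hank f) := by
  have hadd : ∀ f g, hank (f + g) = hank f + hank g := by
    intro f g; ext1 x; simp [hank, toep_add]; abel
  have halg : ∀ z : ℂ, hank (algebraMap ℂ _ z) = 0 := by
    intro z; ext1 x; simp [hank, Algebra.algebraMap_eq_smul_one, toep_smul, toep_one]
  have hmul : ∀ f g, IsCompactOperator (hank f) → IsCompactOperator (hank g) →
      IsCompactOperator (hank (f * g)) := by
    intro f g hf hg
    rw [hank_mul]
    exact (hf.comp_clm (toep g)).add (hg.clm_comp (M f - jj ∘L adjoint jj ∘L M f))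
  let A : StarSubalgebra ℂ C(Circle, ℂ) :=
    { carrier := {f | IsCompactOperator (hank f) ∧ IsCompactOperator (hank (star f))}
      mul_mem' := by
        rintro f g ⟨hf, hf'⟩ ⟨hg, hg'⟩
        refine ⟨hmul _ _ hf hg, ?_⟩
        rw [star_mul]; exact hmul _ _ hg' hf'
      add_mem' := by
        rintro f g ⟨hf, hf'⟩ ⟨hg, hg'⟩
        refine ⟨?_, ?_⟩
        · rw [hadd]; exact hf.add hg
        · rw [star_add, hadd]; exact hf'.add hg'
      algebraMap_mem' := by
        intro z
        refine ⟨?_, ?_⟩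
        · rw [halg]; exact isCompactOperator_zero
        · rw [← algebraMap_star_comm, halg]; exact isCompactOperator_zero
      star_mem' := by
        rintro f ⟨hf, hf'⟩
        exact ⟨hf', by rw [star_star]; exact hf⟩ }
  refine (sw A ?_ ?_ f).1
  · exact (isClosed_compact.preimage hank_cont).inter
      (isClosed_compact.preimage (hank_cont.comp continuous_star))
  · refine ⟨?_, hank_star_zc⟩
    rw [hank_zc]; exact isCompactOperator_zero

lemma toep_mul_mem (f g : C(Circle, ℂ)) : toep f * toep g - toep (f * g) ∈ compactOps Hnat := by
  have h : ∀ f g, IsCompactOperator ⇑(toep f * toep g - toep (f * g)) := by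
    intro f g
    rw [toep_mul]
    exact ((hank_compact g).clm_comp (adjoint jj ∘L M f)).neg
  refine ⟨h f g, ?_⟩
  rw [star_sub, star_mul, star_toep, star_toep, star_toep, star_mul]
  exact h _ _

/-- The symbol relation. -/
def R : StarSubalgebra ℂ (BB × C(Circle, ℂ)) where
  carrier := {p | p.1 - toep p.2 ∈ compactOps Hnat}
  mul_mem' := by
    rintro ⟨T, f⟩ ⟨T', g⟩ h h'
    simp only [Set.mem_ofPred_eq, Prod.mk_mul_mk] at *
    have e : T * T' - toep (f * g) = T * (T' - toep g) + (T - toep f) * toep g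
      + (toep f * toep g - toep (f * g)) := by noncomm_ring
    rw [e]
    exact add_mem (add_mem (compactOps_mul_left _ h') (compactOps_mul_right _ h))
      (toep_mul_mem f g)
  add_mem' := by
    rintro ⟨T, f⟩ ⟨T', g⟩ h h'
    simp only [Set.mem_ofPred_eq, Prod.mk_add_mk] at *
    rw [toep_add, add_sub_add_comm]
    exact add_mem h h'
  algebraMap_mem' := by
    intro z
    have : (algebraMap ℂ (BB × C(Circle, ℂ)) z) = (z • 1, z • 1) := by
      rw [Algebra.algebraMap_eq_smul_one]; rfl
    simp only [Set.mem_ofPred_eq, this, toep_smul, toep_one, sub_self]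
    exact zero_mem _
  star_mem' := by
    rintro ⟨T, f⟩ h
    have h1 : T - toep f ∈ compactOps Hnat := h
    have h2 : star T - toep (star f) ∈ compactOps Hnat := by
      rw [← star_toep, ← star_sub]
      exact star_mem h1
    exact h2

lemma mem_R {T : BB} {f : C(Circle, ℂ)} : (T, f) ∈ R ↔ T - toep f ∈ compactOps Hnat := Iff.rfl

lemma R_closed : IsClosed (R : Set (BB × C(Circle, ℂ))) :=
  isClosed_compactOps.preimage (continuous_fst.sub (toep_cont.comp continuous_snd))

lemma toep_conj (f : C(Circle, ℂ)) : star V * toep f * V = toep f := by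
  have e1 : star V * toep f * V = adjoint (jj ∘L V) ∘L M f ∘L (jj ∘L V) := by
    ext1 x; simp [toep, mapp, adjoint_comp, star_eq_adjoint]
  have e2 : M f * S = S * M f := by
    rw [← M_zc, ← map_mul, ← map_mul, mul_comm]
  rw [e1, jj_V, adjoint_comp, toep]
  have e3 : M f ∘L (S ∘L jj) = S ∘L (M f ∘L jj) := by
    rw [← comp_assoc, ← comp_assoc]
    exact congrArg (fun T => T ∘L jj) e2
  have e4 : adjoint S ∘L S = 1 := starS_mul_S
  rw [e3, comp_assoc, ← comp_assoc (adjoint S) S, e4]; rfl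

lemma toep_conj_pow (f : C(Circle, ℂ)) (n : ℕ) : star V ^ n * toep f * V ^ n = toep f := by
  induction n with
  | zero => simp
  | succ n ih =>
    rw [pow_succ, pow_succ']
    have : star V ^ n * star V * toep f * (V * V ^ n)
      = star V ^ n * (star V * toep f * V) * V ^ n := by noncomm_ring
    rw [this, toep_conj, ih]

lemma toep_compact {f : C(Circle, ℂ)} (h : toep f ∈ compactOps Hnat) : f = 0 := by
  have h1 : toep f = 0 := by
    have hs : Tendsto (fun n : ℕ => ‖star V ^ n * toep f‖) atTop (𝓝 0) := by
      have := (tendsto_starV_compact h.1).norm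
      rwa [norm_zero] at this
    have hV : ∀ n : ℕ, ‖V ^ n‖ ≤ 1 := by
      intro n
      have e : ‖V‖ ≤ 1 := by rw [← norm_star]; exact norm_starV_le
      rcases n with _ | n
      · rw [pow_zero]; exact ContinuousLinearMap.norm_id_le
      · exact (norm_pow_le' _ (by omega)).trans (pow_le_one₀ (norm_nonneg _) e)
    have hle : ∀ n : ℕ, ‖toep f‖ ≤ ‖star V ^ n * toep f‖ := by
      intro n
      calc ‖toep f‖ = ‖star V ^ n * toep f * V ^ n‖ := by rw [toep_conj_pow]
        _ ≤ ‖star V ^ n * toep f‖ * ‖V ^ n‖ := norm_mul_le _ _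
        _ ≤ ‖star V ^ n * toep f‖ * 1 := by gcongr; exact hV n
        _ = _ := mul_one _
    have := ge_of_tendsto' hs hle
    exact norm_le_zero_iff.1 this
  apply M_inj
  apply clm_ext; intro b
  apply l2_ext; intro a
  have hSn : ∀ (n : ℕ) (i : ℤ), (S ^ n) (bv i) = bv (i + n) := by
    intro n i
    induction n with
    | zero => simp
    | succ n ih => rw [pow_succ', mapp, ih, S_bv]; congr 1; push_cast; ring
  have hcomm : ∀ n : ℕ, M f * S ^ n = S ^ n * M f := by
    intro n
    rw [← M_zc, ← map_pow, ← map_mul, ← map_mul, mul_comm]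
  have hiso : ∀ (n : ℕ) (x y : E), inner ℂ ((S ^ n) x) ((S ^ n) y) = inner ℂ x y := by
    intro n x y
    rw [← adjoint_inner_left, ← star_eq_adjoint, ← mapp, star_pow]
    have : star S ^ n * S ^ n = 1 := by
      have := (unitary (E →L[ℂ] E)).pow_mem S_unitary n
      rw [← star_pow]; exact (Unitary.mem_iff.1 this).1
    rw [this]; rfl
  let n : ℕ := a.natAbs + b.natAbs
  obtain ⟨a', ha⟩ : ∃ a' : ℕ, a + n = a' := ⟨(a + n).toNat, by omega⟩
  obtain ⟨b', hb⟩ : ∃ b' : ℕ, b + n = b' := ⟨(b + n).toNat, by omega⟩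
  have h2 : inner ℂ (bv a') (toep f (bv b')) = 0 := by rw [h1]; simp
  simp only [toep, comp_apply, adjoint_inner_right, jj_bv] at h2
  rw [← ha, ← hb, ← hSn, ← hSn, ← mapp, hcomm, mapp, hiso, inner_bv] at h2
  exact h2

lemma R_inj {f : C(Circle, ℂ)} (h : ((0 : BB), f) ∈ R) : f = 0 := by
  apply toep_compact
  have := neg_mem (mem_R.1 h)
  simpa using this

lemma R_unique {T : BB} {f g : C(Circle, ℂ)} (h : (T, f) ∈ R) (h' : (T, g) ∈ R) : f = g := by
  have := sub_mem h h'
  rw [Prod.mk_sub_mk, sub_self] at this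
  exact sub_eq_zero.1 (R_inj this)

lemma toep_zc : toep zc = V := by
  rw [toep, M_zc, ← jj_V, ← comp_assoc, adj_jj]; rfl

lemma toep_zero : toep 0 = 0 := by
  have := toep_smul 0 0
  simpa using this

lemma mem_compactOps_dg {b : ℕ → ℂ} (h : Tendsto b atTop (𝓝 0)) : dg b ∈ compactOps Hnat := by
  refine ⟨compact_dg h, ?_⟩
  obtain ⟨C, hC0, hC⟩ := bounded_of_tendsto h
  rw [star_dg hC]
  apply compact_dg
  have := h.star
  rwa [star_zero] at this

lemma dg_sub_mem {b : ℕ → ℂ} {z : ℂ} (h : Tendsto b atTop (𝓝 z)) :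
    dg b - z • 1 ∈ compactOps Hnat := by
  obtain ⟨C, hC0, hC⟩ := bounded_of_tendsto h
  rw [← dg_const, dg_sub hC (D := ‖z‖) (fun _ => le_rfl)]
  apply mem_compactOps_dg
  have := h.sub_const z
  rwa [sub_self] at this

lemma R_dg {b : ℕ → ℂ} {z : ℂ} (h : Tendsto b atTop (𝓝 z)) : (dg b, z • 1) ∈ R := by
  rw [mem_R, toep_smul, toep_one]
  exact dg_sub_mem h

lemma R_V {b : ℕ → ℂ} {z : ℂ} (h : Tendsto b atTop (𝓝 z)) : (V * dg b, z • zc) ∈ R := by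
  rw [mem_R, toep_smul, toep_zc]
  have : V * dg b - z • V = V * (dg b - z • 1) := by rw [mul_sub, mul_smul_comm, mul_one]
  rw [this]
  exact compactOps_mul_left _ (dg_sub_mem h)

lemma toep_pair_mem (A : StarSubalgebra ℂ (BB × BB)) (hA : IsClosed (A : Set (BB × BB)))
    (hK : ∀ K ∈ compactOps Hnat, ∀ K' ∈ compactOps Hnat, (K, K') ∈ A)
    (hV : (V, V) ∈ A) (f : C(Circle, ℂ)) : (toep f, toep f) ∈ A := by
  let A' : StarSubalgebra ℂ C(Circle, ℂ) :=
    { carrier := {f | (toep f, toep f) ∈ A}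
      mul_mem' := by
        intro f g hf hg
        simp only [Set.mem_ofPred_eq] at *
        have h1 := mul_mem hf hg
        have h2 := sub_mem h1 (hK _ (toep_mul_mem f g) _ (toep_mul_mem f g))
        simpa only [Prod.mk_mul_mk, Prod.mk_sub_mk, sub_sub_cancel] using h2
      add_mem' := by
        intro f g hf hg
        simp only [Set.mem_ofPred_eq] at *
        rw [toep_add]; exact add_mem hf hg
      algebraMap_mem' := by
        intro z
        simp only [Set.mem_ofPred_eq, Algebra.algebraMap_eq_smul_one, toep_smul, toep_one]
        have := A.algebraMap_mem z
        rwa [Algebra.algebraMap_eq_smul_one] at this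
      star_mem' := by
        intro f hf
        have h1 : (toep f, toep f) ∈ A := hf
        have h2 : star (toep f, toep f) ∈ A := A.star_mem' h1
        have h3 : star (toep f, toep f) = (toep (star f), toep (star f)) := by
          rw [← star_toep]; exact Prod.ext rfl rfl
        rw [h3] at h2
        exact h2 }
  refine sw A' ?_ ?_ f
  · exact hA.preimage (toep_cont.prodMk toep_cont)
  · show (toep zc, toep zc) ∈ A
    rw [toep_zc]; exact hV

end Pod

namespace Pod

open ContinuousLinearMap Filter Topology

section ops
variable (μ k : ℝ)

/-- weights -/
def sw_ (j : ℕ) : ℝ := Real.sqrt (1 - μ ^ (2 * j))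

/-- the operator γ -/
def gm : BB := dg (fun j : ℕ => ((μ ^ j : ℝ) : ℂ))

/-- the diagonal part of α -/
def sd : BB := dg (fun j : ℕ => ((sw_ μ j : ℝ) : ℂ))

/-- the operator α -/
def al : BB := star V * sd μ

/-- first coordinate -/
def X1 : BB := (k : ℂ) • al μ + gm μ

/-- second coordinate -/
def X2 : BB := star (al μ) - ((k * μ : ℝ) : ℂ) • gm μ

/-- diagonal generator -/
def A0 : BB := star (X1 μ k) * X1 μ k - ((k ^ 2 : ℝ) : ℂ) • 1

/-- shift generator -/
def B0 : BB := star (X1 μ k) * X2 μ k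

end ops

section rel
variable {μ k : ℝ} (hμ : 0 < μ) (hμ1 : μ < 1) (hk : 0 < k)

lemma sw_zero : sw_ μ 0 = 0 := by simp [sw_]

lemma sw_sq (hμ : 0 < μ) (hμ1 : μ < 1) (j : ℕ) : sw_ μ j ^ 2 = 1 - μ ^ (2 * j) := by
  rw [sw_, Real.sq_sqrt]
  have : μ ^ (2 * j) ≤ 1 := pow_le_one₀ hμ.le hμ1.le
  linarith

lemma sw_pos (hμ : 0 < μ) (hμ1 : μ < 1) (j : ℕ) : 0 < sw_ μ (j + 1) := by
  rw [sw_]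
  apply Real.sqrt_pos.2
  have : μ ^ (2 * (j + 1)) < 1 := pow_lt_one₀ hμ.le hμ1 (by omega)
  linarith

lemma sw_bd (hμ : 0 < μ) (j : ℕ) : ‖((sw_ μ j : ℝ) : ℂ)‖ ≤ 1 := by
  rw [Complex.norm_real, Real.norm_eq_abs, sw_, abs_of_nonneg (Real.sqrt_nonneg _)]
  have : 0 < μ ^ (2 * j) := by positivity
  exact Real.sqrt_le_one.2 (by linarith)

lemma gm_bd (hμ : 0 < μ) (hμ1 : μ < 1) (j : ℕ) : ‖((μ ^ j : ℝ) : ℂ)‖ ≤ 1 := by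
  rw [Complex.norm_real, Real.norm_eq_abs, abs_of_nonneg (by positivity)]
  exact pow_le_one₀ hμ.le hμ1.le

lemma gm_apply (hμ : 0 < μ) (hμ1 : μ < 1) (f : Hnat) (j : ℕ) : gm μ f j = (μ : ℂ) ^ j * f j := by
  rw [gm, dg_apply (gm_bd hμ hμ1)]; simp

lemma sd_apply (hμ : 0 < μ) (f : Hnat) (j : ℕ) : sd μ f j = (sw_ μ j : ℂ) * f j := by
  rw [sd, dg_apply (sw_bd hμ)]

lemma star_gm (hμ : 0 < μ) (hμ1 : μ < 1) : star (gm μ) = gm μ := by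
  rw [gm, star_dg (gm_bd hμ hμ1)]; simp

lemma star_sd (hμ : 0 < μ) : star (sd μ) = sd μ := by
  rw [sd, star_dg (sw_bd hμ)]; simp

lemma al_apply (hμ : 0 < μ) (f : Hnat) (j : ℕ) :
    al μ f j = (sw_ μ (j + 1) : ℂ) * f (j + 1) := by
  rw [al, mapp, starV_apply, sd_apply hμ]

lemma star_al (hμ : 0 < μ) : star (al μ) = sd μ * V := by
  rw [al, star_mul, star_star, star_sd hμ]

lemma star_al_zero (hμ : 0 < μ) (f : Hnat) : star (al μ) f 0 = 0 := by
  rw [star_al hμ, mapp, sd_apply hμ, V_apply_zero, mul_zero]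

lemma star_al_succ (hμ : 0 < μ) (f : Hnat) (j : ℕ) :
    star (al μ) f (j + 1) = (sw_ μ (j + 1) : ℂ) * f j := by
  rw [star_al hμ, mapp, sd_apply hμ, V_apply_succ]

lemma add_app (f g : Hnat) (j : ℕ) : (f + g) j = f j + g j := rfl
lemma sub_app (f g : Hnat) (j : ℕ) : (f - g) j = f j - g j := rfl
lemma smul_app (z : ℂ) (f : Hnat) (j : ℕ) : (z • f) j = z * f j := rfl
lemma zero_app (j : ℕ) : (0 : Hnat) j = 0 := rfl

lemma one_app (f : Hnat) : (1 : BB) f = f := rfl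

lemma op_ext {S T : BB} (h : ∀ f j, S f j = T f j) : S = T := by
  ext1 f; exact l2_ext (h f)

lemma sw_sqC (hμ : 0 < μ) (hμ1 : μ < 1) (j : ℕ) : (sw_ μ j : ℂ) ^ 2 = 1 - (μ : ℂ) ^ (2 * j) := by
  rw [← Complex.ofReal_pow, sw_sq hμ hμ1]; push_cast; rfl

lemma rel1 (hμ : 0 < μ) (hμ1 : μ < 1) : star (al μ) * al μ = 1 - gm μ * gm μ := by
  apply op_ext; intro f j
  rw [sub_apply, sub_app, mapp, mapp, one_app, gm_apply hμ hμ1, gm_apply hμ hμ1]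
  rcases j with _ | j
  · rw [star_al_zero hμ]; simp
  · rw [star_al_succ hμ, al_apply hμ, ← mul_assoc, ← sq, sw_sqC hμ hμ1]; ring

lemma rel2 (hμ : 0 < μ) (hμ1 : μ < 1) :
    al μ * star (al μ) = 1 - ((μ : ℂ) ^ 2) • (gm μ * gm μ) := by
  apply op_ext; intro f j
  rw [sub_apply, sub_app, mapp, smul_apply, smul_app, mapp, one_app, gm_apply hμ hμ1,
    gm_apply hμ hμ1, al_apply hμ, star_al_succ hμ, ← mul_assoc, ← sq, sw_sqC hμ hμ1]
  ring

lemma rel3 (hμ : 0 < μ) (hμ1 : μ < 1) : al μ * gm μ = (μ : ℂ) • (gm μ * al μ) := by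
  apply op_ext; intro f j
  rw [mapp, smul_apply, smul_app, mapp, gm_apply hμ hμ1, al_apply hμ, al_apply hμ,
    gm_apply hμ hμ1]
  ring

lemma rel4 (hμ : 0 < μ) (hμ1 : μ < 1) :
    gm μ * star (al μ) = (μ : ℂ) • (star (al μ) * gm μ) := by
  have := congrArg star (rel3 hμ hμ1)
  rw [star_mul, star_smul, star_mul, star_gm hμ hμ1] at this
  simpa using this

lemma star_X1 (hμ : 0 < μ) (hμ1 : μ < 1) :
    star (X1 μ k) = (k : ℂ) • star (al μ) + gm μ := by
  rw [X1, star_add, star_smul, star_gm hμ hμ1]; simp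

lemma star_X2 (hμ : 0 < μ) (hμ1 : μ < 1) :
    star (X2 μ k) = al μ - ((k * μ : ℝ) : ℂ) • gm μ := by
  rw [X2, star_sub, star_smul, star_gm hμ hμ1, star_star]; simp

lemma R1 (hμ : 0 < μ) (hμ1 : μ < 1) :
    X1 μ k * star (X1 μ k) = (1 + (k : ℂ) ^ 2) • 1 - X2 μ k * star (X2 μ k) := by
  rw [star_X1 hμ hμ1, star_X2 hμ hμ1, X1, X2]
  simp only [add_mul, mul_add, sub_mul, mul_sub, smul_mul_assoc, mul_smul_comm, rel1 hμ hμ1,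
    rel2 hμ hμ1, rel3 hμ hμ1, rel4 hμ hμ1]
  push_cast
  module

lemma R2 (hμ : 0 < μ) (hμ1 : μ < 1) :
    star (X2 μ k) * X2 μ k = 1 - ((μ : ℂ) ^ 2) • A0 μ k := by
  rw [A0, star_X1 hμ hμ1, star_X2 hμ hμ1, X1, X2]
  simp only [add_mul, mul_add, sub_mul, mul_sub, smul_mul_assoc, mul_smul_comm, rel1 hμ hμ1,
    rel2 hμ hμ1, rel3 hμ hμ1, rel4 hμ hμ1]
  push_cast
  module

lemma A0_eq (hμ : 0 < μ) (hμ1 : μ < 1) :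
    A0 μ k = ((1 : ℂ) - (k : ℂ) ^ 2) • (gm μ * gm μ)
      + (k : ℂ) • (star (al μ) * gm μ + gm μ * al μ) := by
  rw [A0, star_X1 hμ hμ1, X1]
  simp only [add_mul, mul_add, sub_mul, mul_sub, smul_mul_assoc, mul_smul_comm, rel1 hμ hμ1]
  push_cast
  module

lemma star_A0 : star (A0 μ k) = A0 μ k := by
  rw [A0, star_sub, star_mul, star_star, star_smul, star_one]; simp

lemma X1X1 : star (X1 μ k) * X1 μ k = A0 μ k + ((k : ℂ) ^ 2) • 1 := by
  rw [A0]; push_cast; module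

lemma AB (hμ : 0 < μ) (hμ1 : μ < 1) : A0 μ k * B0 μ k = ((μ : ℂ) ^ 2) • (B0 μ k * A0 μ k) := by
  have e : A0 μ k * B0 μ k = star (X1 μ k) * (X1 μ k * star (X1 μ k)) * X2 μ k
      - ((k : ℂ) ^ 2) • B0 μ k := by
    rw [A0, B0]; push_cast; simp only [sub_mul, smul_mul_assoc, one_mul, mul_assoc]
  have e2 : star (X1 μ k) * (X2 μ k * star (X2 μ k)) * X2 μ k = 
      B0 μ k * (star (X2 μ k) * X2 μ k) := by rw [B0]; noncomm_ring
  rw [e, R1 hμ hμ1, mul_sub, sub_mul, e2, R2 hμ hμ1, mul_smul_comm, mul_one, smul_mul_assoc,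
    mul_sub, mul_one, mul_smul_comm]
  rw [show star (X1 μ k) * X2 μ k = B0 μ k from rfl]
  module

lemma star_B0 : star (B0 μ k) = star (X2 μ k) * X1 μ k := by
  rw [B0, star_mul, star_star]

lemma BBs (hμ : 0 < μ) (hμ1 : μ < 1) :
    B0 μ k * star (B0 μ k) = (A0 μ k + ((k : ℂ) ^ 2) • 1) * (1 - A0 μ k) := by
  have e : B0 μ k * star (B0 μ k)
     = star (X1 μ k) * (X2 μ k * star (X2 μ k)) * X1 μ k := by
    rw [star_B0, B0]; noncomm_ring
  have e2 : X2 μ k * star (X2 μ k) = (1 + (k : ℂ) ^ 2) • 1 - X1 μ k * star (X1 μ k) := by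
    rw [R1 hμ hμ1]; abel
  have e3 : star (X1 μ k) * (X1 μ k * star (X1 μ k)) * X1 μ k
     = (star (X1 μ k) * X1 μ k) * (star (X1 μ k) * X1 μ k) := by noncomm_ring
  rw [e, e2, mul_sub, sub_mul, e3, mul_smul_comm, smul_mul_assoc, mul_one, X1X1]
  simp only [mul_sub, mul_add, add_mul, mul_one, one_mul, smul_mul_assoc, mul_smul_comm]
  module

lemma BsB (hμ : 0 < μ) (hμ1 : μ < 1) :
    star (B0 μ k) * B0 μ k =
      (1 - ((μ : ℂ) ^ 2) • A0 μ k) * (((k : ℂ) ^ 2) • 1 + ((μ : ℂ) ^ 2) • A0 μ k) := by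
  have e : star (B0 μ k) * B0 μ k
     = star (X2 μ k) * (X1 μ k * star (X1 μ k)) * X2 μ k := by
    rw [star_B0, B0]; noncomm_ring
  have e3 : star (X2 μ k) * (X2 μ k * star (X2 μ k)) * X2 μ k
     = (star (X2 μ k) * X2 μ k) * (star (X2 μ k) * X2 μ k) := by noncomm_ring
  rw [e, R1 hμ hμ1, mul_sub, sub_mul, e3, mul_smul_comm, smul_mul_assoc, mul_one, R2 hμ hμ1]
  simp only [sub_mul, mul_sub, mul_add, add_mul, mul_one, one_mul, smul_mul_assoc, mul_smul_comm]
  module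

lemma gm_compact (hμ : 0 < μ) (hμ1 : μ < 1) : gm μ ∈ compactOps Hnat := by
  apply mem_compactOps_dg
  have := tendsto_pow_atTop_nhds_zero_of_lt_one hμ.le hμ1
  have := (Complex.continuous_ofReal.tendsto 0).comp this
  rw [Complex.ofReal_zero] at this
  exact this

lemma A0_compact (hμ : 0 < μ) (hμ1 : μ < 1) : A0 μ k ∈ compactOps Hnat := by
  rw [A0_eq hμ hμ1]
  have h := gm_compact hμ hμ1
  refine add_mem ?_ ?_
  · exact (compactOps Hnat).smul_mem' _ (compactOps_mul_left _ h)
  · exact (compactOps Hnat).smul_mem' _ (add_mem (compactOps_mul_left _ h)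
      (compactOps_mul_right _ h))

end rel

end Pod

namespace Pod

open ContinuousLinearMap Filter Topology

/-- solution of a first order recursion -/
def recSol (μ r : ℝ) : ℕ → ℝ
  | 0 => 1
  | (j + 1) => r * μ ^ j / sw_ μ (j + 1) * recSol μ r j

section eig
variable {μ k : ℝ}

lemma recSol_summable (hμ : 0 < μ) (hμ1 : μ < 1) (r : ℝ) :
    Summable (fun j => recSol μ r j ^ 2) := by
  refine summable_of_ratio_norm_eventually_le (r := 1 / 2) (by norm_num) ?_
  have ht : Tendsto (fun j : ℕ => r ^ 2 / (1 - μ ^ 2) * (μ ^ 2) ^ j) atTop (𝓝 0) := by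
    have := (tendsto_pow_atTop_nhds_zero_of_lt_one (r := μ ^ 2) (by positivity)
      (pow_lt_one₀ hμ.le hμ1 (by norm_num))).const_mul (r ^ 2 / (1 - μ ^ 2))
    rwa [mul_zero] at this
  filter_upwards [ht.eventually_le_const (show (0 : ℝ) < 1 / 2 by norm_num)] with j hj
  rw [Real.norm_eq_abs, Real.norm_eq_abs, abs_of_nonneg (sq_nonneg _), abs_of_nonneg (sq_nonneg _),
    recSol, mul_pow]
  gcongr
  refine le_trans ?_ hj
  have h1 : 0 < 1 - μ ^ 2 := by
    have := pow_lt_one₀ hμ.le hμ1 (n := 2) (by norm_num)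
    linarith
  have h2 : 1 - μ ^ 2 ≤ sw_ μ (j + 1) ^ 2 := by
    rw [sw_sq hμ hμ1]
    have : μ ^ (2 * (j + 1)) ≤ μ ^ 2 := pow_le_pow_of_le_one hμ.le hμ1.le (by omega)
    linarith
  rw [div_pow, mul_pow, ← pow_mul, ← pow_mul, mul_comm j 2, div_mul_eq_mul_div]
  gcongr

/-- solution of a first order recursion in ℓ² -/
lemma exists_recSol (hμ : 0 < μ) (hμ1 : μ < 1) (r : ℝ) : ∃ h : Hnat, h ≠ 0 ∧
    (∀ j, (sw_ μ (j + 1) : ℂ) * h (j + 1) = r * μ ^ j * h j) ∧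
    ∀ f : Hnat, (∀ j, (sw_ μ (j + 1) : ℂ) * f (j + 1) = r * μ ^ j * f j) → ∃ z : ℂ, f = z • h := by
  have hs : ∀ j, (sw_ μ (j + 1) : ℂ) ≠ 0 := fun j => by
    exact_mod_cast (sw_pos hμ hμ1 j).ne'
  have hm : Memℓp (fun j : ℕ => ((recSol μ r j : ℝ) : ℂ)) 2 := by
    apply memℓp_gen
    simpa using recSol_summable hμ hμ1 r
  let h : Hnat := ⟨_, hm⟩
  have happ : ∀ j, h j = ((recSol μ r j : ℝ) : ℂ) := fun _ => rfl
  have h0 : h 0 = 1 := by rw [happ]; simp [recSol]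
  have hr : ∀ j, (sw_ μ (j + 1) : ℂ) * h (j + 1) = r * μ ^ j * h j := by
    intro j
    rw [happ, happ, recSol]
    push_cast
    have := hs j
    field_simp
  refine ⟨h, ?_, hr, ?_⟩
  · intro hh
    rw [hh, zero_app] at h0
    exact zero_ne_one h0
  · intro f hf
    refine ⟨f 0, l2_ext fun j => ?_⟩
    rw [smul_app]
    induction j with
    | zero => rw [h0, mul_one]
    | succ j ih =>
      apply mul_left_cancel₀ (hs j)
      linear_combination hf j + r * μ ^ j * ih - f 0 * hr j

lemma normsq_eq (T : BB) (f : Hnat) (z : ℝ) (h : star T (T f) = (z : ℂ) • f) :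
    ‖T f‖ ^ 2 = z * ‖f‖ ^ 2 := by
  have h1 : inner ℂ (T f) (T f) = (z : ℂ) * inner ℂ f f := by
    rw [← adjoint_inner_right, ← star_eq_adjoint, h, inner_smul_right]
  rw [inner_self_eq_norm_sq_to_K, inner_self_eq_norm_sq_to_K] at h1
  have h2 : (((‖T f‖ ^ 2 : ℝ)) : ℂ) = ((z * ‖f‖ ^ 2 : ℝ) : ℂ) := by
    push_cast; exact h1
  exact Complex.ofReal_injective h2

lemma eig_BsB (hμ : 0 < μ) (hμ1 : μ < 1) {f : Hnat} {l : ℝ} (h : A0 μ k f = (l : ℂ) • f) :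
    star (B0 μ k) (B0 μ k f) = (((1 - μ ^ 2 * l) * (k ^ 2 + μ ^ 2 * l) : ℝ) : ℂ) • f := by
  rw [← mapp, BsB hμ hμ1, mapp]
  simp only [add_apply, sub_apply, smul_apply, map_add, map_smul, one_app, h, smul_smul]
  push_cast
  module

lemma eig_BBs (hμ : 0 < μ) (hμ1 : μ < 1) {f : Hnat} {l : ℝ} (h : A0 μ k f = (l : ℂ) • f) :
    B0 μ k (star (B0 μ k) f) = (((l + k ^ 2) * (1 - l) : ℝ) : ℂ) • f := by
  rw [← mapp, BBs hμ hμ1, mapp]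
  simp only [add_apply, sub_apply, smul_apply, map_sub, map_smul, one_app, h, smul_smul]
  push_cast
  module

lemma eig_B (hμ : 0 < μ) (hμ1 : μ < 1) {f : Hnat} {l : ℝ} (h : A0 μ k f = (l : ℂ) • f) :
    A0 μ k (B0 μ k f) = ((μ ^ 2 * l : ℝ) : ℂ) • B0 μ k f := by
  rw [← mapp, AB hμ hμ1, smul_apply, mapp, h, map_smul, smul_smul]
  push_cast; rfl

lemma eig_Bs (hμ : 0 < μ) (hμ1 : μ < 1) {f : Hnat} {l : ℝ} (h : A0 μ k f = (l : ℂ) • f) :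
    A0 μ k (star (B0 μ k) f) = ((l / μ ^ 2 : ℝ) : ℂ) • star (B0 μ k) f := by
  have e := congrArg star (AB (k := k) hμ hμ1)
  rw [star_mul, star_smul, star_mul, star_A0] at e
  have e2 := congrArg (fun T : BB => T f) e
  simp only [mapp, smul_apply, h, map_smul] at e2
  have hm : ((μ : ℂ) ^ 2) ≠ 0 := by
    have : (μ : ℂ) ≠ 0 := by exact_mod_cast hμ.ne'
    exact pow_ne_zero _ this
  have e3 : star ((μ : ℂ) ^ 2) = (μ : ℂ) ^ 2 := by simp
  rw [e3] at e2
  rw [← inv_smul_smul₀ hm (A0 μ k (star (B0 μ k) f)), ← e2, smul_smul]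
  congr 1
  push_cast
  field_simp

lemma eig_Bs_norm (hμ : 0 < μ) (hμ1 : μ < 1) {f : Hnat} {l : ℝ} (h : A0 μ k f = (l : ℂ) • f) :
    ‖star (B0 μ k) f‖ ^ 2 = (l + k ^ 2) * (1 - l) * ‖f‖ ^ 2 := by
  apply normsq_eq
  rw [star_star]
  exact eig_BBs hμ hμ1 h

/-- weights of the shift -/
def bw (μ k l : ℝ) (n : ℕ) : ℝ :=
  Real.sqrt ((1 - μ ^ 2 * (l * μ ^ (2 * n))) * (k ^ 2 + μ ^ 2 * (l * μ ^ (2 * n))))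

/-- orthonormal sequence of eigenvectors -/
structure IsW (μ k l : ℝ) (w : ℕ → Hnat) : Prop where
  norm : ∀ n, ‖w n‖ = 1
  A : ∀ n, A0 μ k (w n) = ((l * μ ^ (2 * n) : ℝ) : ℂ) • w n
  B : ∀ n, B0 μ k (w n) = (bw μ k l n : ℂ) • w (n + 1)
  Bs : ∀ n, star (B0 μ k) (w (n + 1)) = (bw μ k l n : ℂ) • w n
  Bs0 : star (B0 μ k) (w 0) = 0
  uniq : ∀ f, A0 μ k f = (l : ℂ) • f → ∃ z : ℂ, f = z • w 0

/-- the sequence -/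
def wseq (μ k l : ℝ) (v : Hnat) : ℕ → Hnat
  | 0 => v
  | (n + 1) => ((bw μ k l n : ℂ))⁻¹ • B0 μ k (wseq μ k l v n)

lemma exists_W (hμ : 0 < μ) (hμ1 : μ < 1) {l : ℝ} (hl : (l + k ^ 2) * (1 - l) = 0)
    (hp : ∀ n : ℕ, 0 < (1 - μ ^ 2 * (l * μ ^ (2 * n))) * (k ^ 2 + μ ^ 2 * (l * μ ^ (2 * n))))
    (u : Hnat) (hu : u ≠ 0) (hAu : A0 μ k u = (l : ℂ) • u)
    (hun : ∀ f, A0 μ k f = (l : ℂ) • f → ∃ z : ℂ, f = z • u) : ∃ w, IsW μ k l w := by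
  have hbpos : ∀ n, 0 < bw μ k l n := fun n => Real.sqrt_pos.2 (hp n)
  have hb : ∀ n, (bw μ k l n : ℂ) ≠ 0 := fun n => by exact_mod_cast (hbpos n).ne'
  have hb2 : ∀ n, bw μ k l n ^ 2 =
    (1 - μ ^ 2 * (l * μ ^ (2 * n))) * (k ^ 2 + μ ^ 2 * (l * μ ^ (2 * n))) :=
    fun n => Real.sq_sqrt (hp n).le
  have hnu : (‖u‖ : ℂ) ≠ 0 := by exact_mod_cast norm_ne_zero_iff.2 hu
  let v : Hnat := ((‖u‖ : ℂ))⁻¹ • u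
  have hAv : A0 μ k v = (l : ℂ) • v := by
    show A0 μ k (((‖u‖ : ℂ))⁻¹ • u) = (l : ℂ) • (((‖u‖ : ℂ))⁻¹ • u)
    rw [map_smul, hAu, smul_comm]
  have hnv : ‖v‖ = 1 := by
    show ‖((‖u‖ : ℂ))⁻¹ • u‖ = 1
    rw [norm_smul, norm_inv, Complex.norm_real, norm_norm]
    exact inv_mul_cancel₀ (norm_ne_zero_iff.2 hu)
  have hA : ∀ n, A0 μ k (wseq μ k l v n) = ((l * μ ^ (2 * n) : ℝ) : ℂ) • wseq μ k l v n := by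
    intro n
    induction n with
    | zero => simpa [wseq] using hAv
    | succ n ih =>
      rw [wseq, map_smul, eig_B hμ hμ1 ih, smul_comm]
      congr 2
      ring
  have hB : ∀ n, B0 μ k (wseq μ k l v n) = (bw μ k l n : ℂ) • wseq μ k l v (n + 1) := by
    intro n
    rw [wseq, smul_inv_smul₀ (hb n)]
  have hN : ∀ n, ‖wseq μ k l v n‖ = 1 := by
    intro n
    induction n with
    | zero => exact hnv
    | succ n ih =>
      have := normsq_eq _ _ _ (eig_BsB hμ hμ1 (hA n))
      rw [ih, ← hb2, one_pow, mul_one] at this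
      have h2 : ‖B0 μ k (wseq μ k l v n)‖ = bw μ k l n :=
        (sq_eq_sq₀ (norm_nonneg _) (hbpos n).le).1 this
      rw [wseq, norm_smul, h2, norm_inv, Complex.norm_real, Real.norm_eq_abs,
        abs_of_pos (hbpos n)]
      exact inv_mul_cancel₀ (hbpos n).ne'
  refine ⟨wseq μ k l v, hN, hA, hB, ?_, ?_, ?_⟩
  · intro n
    rw [wseq, map_smul, eig_BsB hμ hμ1 (hA n), ← hb2, smul_smul]
    congr 1
    have := hb n
    push_cast
    field_simp
  · have := eig_Bs_norm hμ hμ1 hAv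
    rw [hl, zero_mul] at this
    exact norm_eq_zero.1 (pow_eq_zero_iff (two_ne_zero) |>.1 this)
  · intro f hf
    obtain ⟨z, hz⟩ := hun f hf
    refine ⟨z * ‖u‖, ?_⟩
    show f = (z * ‖u‖) • (((‖u‖ : ℂ))⁻¹ • u)
    rw [hz, smul_smul, mul_assoc, mul_inv_cancel₀ hnu, mul_one]

lemma X1_app (hμ : 0 < μ) (hμ1 : μ < 1) (f : Hnat) (j : ℕ) :
    X1 μ k f j = k * (sw_ μ (j + 1) * f (j + 1)) + μ ^ j * f j := by
  rw [X1, add_apply, add_app, smul_apply, smul_app, al_apply hμ, gm_apply hμ hμ1]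

lemma X2s_app (hμ : 0 < μ) (hμ1 : μ < 1) (f : Hnat) (j : ℕ) :
    star (X2 μ k) f j = (sw_ μ (j + 1) * f (j + 1)) - k * μ * μ ^ j * f j := by
  rw [star_X2 hμ hμ1, sub_apply, sub_app, smul_apply, smul_app, al_apply hμ, gm_apply hμ hμ1]
  push_cast; ring

lemma pow_lt' (hμ : 0 < μ) (hμ1 : μ < 1) (n : ℕ) : 0 < μ ^ 2 * μ ^ (2 * n) ∧
    μ ^ 2 * μ ^ (2 * n) < 1 := by
  refine ⟨by positivity, ?_⟩
  rw [← pow_add]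
  exact pow_lt_one₀ hμ.le hμ1 (by omega)

lemma exists_Wm (hμ : 0 < μ) (hμ1 : μ < 1) (hk : 0 < k) : ∃ w, IsW μ k (-k ^ 2) w := by
  obtain ⟨h, h0, hr, hu⟩ := exists_recSol hμ hμ1 (-(1 / k))
  have hkC : (k : ℂ) ≠ 0 := by exact_mod_cast hk.ne'
  have hX : ∀ f : Hnat, X1 μ k f = 0 ↔
      ∀ j, (sw_ μ (j + 1) : ℂ) * f (j + 1) = ((-(1 / k) : ℝ) : ℂ) * μ ^ j * f j := by
    intro f
    constructor
    · intro hf j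
      have := X1_app (k := k) hμ hμ1 f j
      rw [hf, zero_app] at this
      apply mul_left_cancel₀ hkC
      push_cast
      field_simp
      linear_combination -this
    · intro hf
      apply l2_ext; intro j
      rw [X1_app hμ hμ1, hf, zero_app]
      push_cast
      field_simp
      ring
  refine exists_W hμ hμ1 (by ring) ?_ h h0 ?_ ?_
  · intro n
    obtain ⟨h1, h2⟩ := pow_lt' hμ hμ1 n
    have e : (1 - μ ^ 2 * (-k ^ 2 * μ ^ (2 * n))) * (k ^ 2 + μ ^ 2 * (-k ^ 2 * μ ^ (2 * n)))
      = (1 + k ^ 2 * (μ ^ 2 * μ ^ (2 * n))) * (k ^ 2 * (1 - μ ^ 2 * μ ^ (2 * n))) := by ring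
    rw [e]
    have : 0 < 1 - μ ^ 2 * μ ^ (2 * n) := by linarith
    positivity
  · rw [A0, sub_apply, mapp, (hX h).2 hr, map_zero, smul_apply, one_app]
    push_cast; module
  · intro f hf
    apply hu
    rw [← hX]
    have e : star (X1 μ k) (X1 μ k f) = ((0 : ℝ) : ℂ) • f := by
      rw [← mapp, X1X1, add_apply, hf, smul_apply, one_app]; push_cast; module
    have := normsq_eq _ _ _ e
    rw [zero_mul] at this
    exact norm_eq_zero.1 (pow_eq_zero_iff (two_ne_zero) |>.1 this)

lemma exists_Wp (hμ : 0 < μ) (hμ1 : μ < 1) (hk : 0 < k) : ∃ w, IsW μ k 1 w := by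
  obtain ⟨h, h0, hr, hu⟩ := exists_recSol hμ hμ1 (k * μ)
  have hkC : (1 + (k : ℂ) ^ 2) ≠ 0 := by
    have : (1 + k ^ 2) ≠ 0 := by positivity
    exact_mod_cast this
  have hX : ∀ f : Hnat, star (X2 μ k) f = 0 ↔
      ∀ j, (sw_ μ (j + 1) : ℂ) * f (j + 1) = ((k * μ : ℝ) : ℂ) * μ ^ j * f j := by
    intro f
    constructor
    · intro hf j
      have := X2s_app (k := k) hμ hμ1 f j
      rw [hf, zero_app] at this
      push_cast
      linear_combination -this
    · intro hf
      apply l2_ext; intro j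
      rw [X2s_app hμ hμ1, hf, zero_app]
      push_cast
      ring
  have hXX : X1 μ k (star (X1 μ k) h) = (1 + (k : ℂ) ^ 2) • h := by
    rw [← mapp, R1 hμ hμ1, sub_apply, mapp, (hX h).2 hr, map_zero, sub_zero]; rfl
  refine exists_W hμ hμ1 (by ring) ?_ (star (X1 μ k) h) ?_ ?_ ?_
  · intro n
    obtain ⟨h1, h2⟩ := pow_lt' hμ hμ1 n
    rw [one_mul]
    have : 0 < 1 - μ ^ 2 * μ ^ (2 * n) := by linarith
    positivity
  · intro e
    rw [e, map_zero] at hXX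
    exact (smul_ne_zero hkC h0) hXX.symm
  · rw [A0, sub_apply, mapp, hXX, map_smul, smul_apply, one_app]
    push_cast; module
  · intro f hf
    have e1 := eig_Bs_norm hμ hμ1 hf
    rw [sub_self, mul_zero, zero_mul] at e1
    have e2 := norm_eq_zero.1 (pow_eq_zero_iff (two_ne_zero) |>.1 e1)
    rw [star_B0, mapp] at e2
    obtain ⟨z, hz⟩ := hu _ ((hX _).1 e2)
    refine ⟨(1 + (k : ℂ) ^ 2)⁻¹ * z, ?_⟩
    have e3 : star (X1 μ k) (X1 μ k f) = (1 + (k : ℂ) ^ 2) • f := by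
      rw [← mapp, X1X1, add_apply, hf, smul_apply, one_app]; push_cast; module
    rw [hz, map_smul] at e3
    rw [mul_smul, e3, inv_smul_smul₀ hkC]

lemma eig_orth {f g : Hnat} {a b : ℝ} (hf : A0 μ k f = (a : ℂ) • f) (hg : A0 μ k g = (b : ℂ) • g)
    (hab : a ≠ b) : inner ℂ f g = 0 := by
  have h1 : inner ℂ (A0 μ k f) g = inner ℂ f (A0 μ k g) := by
    rw [← adjoint_inner_right, ← star_eq_adjoint, star_A0]
  rw [hf, hg, inner_smul_left, inner_smul_right, Complex.conj_ofReal] at h1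
  have h2 : ((a : ℂ) - b) * inner ℂ f g = 0 := by rw [sub_mul, h1, sub_self]
  have h3 : (a : ℂ) - b ≠ 0 := by
    rw [sub_ne_zero]; exact_mod_cast hab
  exact (mul_eq_zero.1 h2).resolve_left h3

lemma B0_zero (hμ : 0 < μ) (hμ1 : μ < 1) (f : Hnat) : B0 μ k f 0 = -(k * μ) * f 0 := by
  rw [B0, mapp, star_X1 hμ hμ1, add_apply, add_app, smul_apply, smul_app, star_al_zero hμ,
    gm_apply hμ hμ1, X2, sub_apply, sub_app, star_al_zero hμ, smul_apply, smul_app,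
    gm_apply hμ hμ1]
  push_cast; ring

lemma apply_le (f : Hnat) (j : ℕ) : ‖f j‖ ≤ ‖f‖ := by
  have := norm_inner_le_norm (𝕜 := ℂ) (bv j) f
  rwa [inner_bv, norm_bv, one_mul] at this

lemma ker_A0 (hμ : 0 < μ) (hμ1 : μ < 1) (hk : 0 < k) {f : Hnat} (hf : A0 μ k f = 0) : f = 0 := by
  have key : ∀ n : ℕ, ∀ f : Hnat, A0 μ k f = 0 → ‖f 0‖ ≤ μ ^ n * ‖f‖ := by
    intro n
    induction n with
    | zero => intro f _; simpa using apply_le f 0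
    | succ n ih =>
      intro f hf
      have hf' : A0 μ k f = ((0 : ℝ) : ℂ) • f := by simpa using hf
      have h1 := eig_Bs hμ hμ1 hf'
      have h2 := eig_Bs_norm hμ hμ1 hf'
      have h3 := eig_BBs hμ hμ1 hf'
      have h4 := congrArg (fun g : Hnat => g 0) h3
      simp only [B0_zero hμ hμ1, smul_app] at h4
      have h5 := ih _ (by simpa using h1)
      have h6 : ‖star (B0 μ k) f‖ = k * ‖f‖ := by
        refine (sq_eq_sq₀ (norm_nonneg _) (by positivity)).1 ?_
        rw [h2]; ring
      have h7 := congrArg norm h4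
      have e1 : ‖(-(k * μ) : ℂ)‖ = k * μ := by
        rw [norm_neg, norm_mul, Complex.norm_real, Complex.norm_real, Real.norm_eq_abs,
          Real.norm_eq_abs, abs_of_pos hk, abs_of_pos hμ]
      have e2 : ‖(((0 + k ^ 2) * (1 - 0) : ℝ) : ℂ)‖ = k ^ 2 := by
        rw [Complex.norm_real, Real.norm_eq_abs, abs_of_nonneg (by nlinarith)]; ring
      rw [norm_mul, norm_mul, e1, e2] at h7
      rw [h6] at h5
      have h8 : k ^ 2 * ‖f 0‖ ≤ k ^ 2 * (μ ^ (n + 1) * ‖f‖) := by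
        rw [← h7]
        calc k * μ * ‖star (B0 μ k) f 0‖ ≤ k * μ * (μ ^ n * (k * ‖f‖)) := by gcongr
          _ = _ := by ring
      exact le_of_mul_le_mul_left h8 (by positivity)
  have hzero : f 0 = 0 := by
    have ht : Tendsto (fun n : ℕ => μ ^ n * ‖f‖) atTop (𝓝 0) := by
      have := (tendsto_pow_atTop_nhds_zero_of_lt_one hμ.le hμ1).mul_const ‖f‖
      rwa [zero_mul] at this
    have := ge_of_tendsto' ht (fun n => key n f hf)
    exact norm_le_zero_iff.1 this
  have hall : ∀ j, f j = 0 := by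
    intro j
    induction j using Nat.strong_induction_on with
    | _ j ih =>
      rcases j with _ | j
      · exact hzero
      · have h1 := congrArg (fun g : Hnat => g j) hf
        have hs : (sw_ μ (j + 1) : ℂ) ≠ 0 := by exact_mod_cast (sw_pos hμ hμ1 j).ne'
        have hkC : (k : ℂ) ≠ 0 := by exact_mod_cast hk.ne'
        have hmC : (μ : ℂ) ≠ 0 := by exact_mod_cast hμ.ne'
        have h2 : star (al μ) (gm μ f) j = 0 := by
          rcases j with _ | j
          · exact star_al_zero hμ _
          · rw [star_al_succ hμ, gm_apply hμ hμ1, ih j (by omega)]; simp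
        simp only [A0_eq hμ hμ1, add_apply, add_app, smul_apply, smul_app, mapp, h2,
          gm_apply hμ hμ1, al_apply hμ, ih j (by omega), zero_app] at h1
        simpa [hs, hkC, hmC] using h1
  exact l2_ext hall

lemma eig_cases (hμ : 0 < μ) (hμ1 : μ < 1) (hk : 0 < k) {w w' : ℕ → Hnat}
    (hw : IsW μ k 1 w) (hw' : IsW μ k (-k ^ 2) w') (N : ℕ) :
    ∀ (l : ℝ) (f : Hnat), (1 + k ^ 2) < |l| / μ ^ (2 * N) → A0 μ k f = (l : ℂ) • f →
      f = 0 ∨ (∃ n z, f = (z : ℂ) • w n) ∨ (∃ n z, f = (z : ℂ) • w' n) := by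
  induction N with
  | zero =>
    intro l f hl hf
    left
    rw [mul_zero, pow_zero, div_one] at hl
    have h := eig_Bs_norm hμ hμ1 hf
    have hneg : (l + k ^ 2) * (1 - l) < 0 := by
      rcases lt_abs.1 hl with h | h
      · apply mul_neg_of_pos_of_neg <;> nlinarith
      · apply mul_neg_of_neg_of_pos <;> nlinarith
    have h2 : ‖f‖ ^ 2 ≤ 0 := by
      by_contra hcon
      push Not at hcon
      have := mul_neg_of_neg_of_pos hneg hcon
      have := sq_nonneg ‖star (B0 μ k) f‖
      linarith
    exact norm_eq_zero.1 (pow_eq_zero_iff (two_ne_zero) |>.1 (le_antisymm h2 (sq_nonneg _)))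
  | succ N ih =>
    intro l f hl hf
    by_cases h1 : l = 1
    · subst h1
      obtain ⟨z, hz⟩ := hw.uniq f hf
      exact Or.inr (Or.inl ⟨0, z, hz⟩)
    by_cases h2 : l = -k ^ 2
    · subst h2
      obtain ⟨z, hz⟩ := hw'.uniq f hf
      exact Or.inr (Or.inr ⟨0, z, hz⟩)
    have hne : (((l + k ^ 2) * (1 - l) : ℝ) : ℂ) ≠ 0 := by
      have : (l + k ^ 2) * (1 - l) ≠ 0 := by
        apply mul_ne_zero
        · intro h; apply h2; linarith
        · intro h; apply h1; linarith
      exact_mod_cast this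
    have hB := eig_BBs hμ hμ1 hf
    have hfe : f = ((((l + k ^ 2) * (1 - l) : ℝ) : ℂ))⁻¹ • B0 μ k (star (B0 μ k) f) := by
      rw [hB, inv_smul_smul₀ hne]
    have hl' : (1 + k ^ 2) < |l / μ ^ 2| / μ ^ (2 * N) := by
      rw [abs_div, abs_of_pos (by positivity : 0 < μ ^ 2), div_div, ← pow_add]
      convert hl using 3
      ring
    rcases ih _ _ hl' (eig_Bs hμ hμ1 hf) with h | ⟨n, z, h⟩ | ⟨n, z, h⟩
    · left
      rw [hfe, h, map_zero, smul_zero]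
    · right; left
      rw [h, map_smul, hw.B, smul_smul, smul_smul] at hfe
      exact ⟨n + 1, _, hfe⟩
    · right; right
      rw [h, map_smul, hw'.B, smul_smul, smul_smul] at hfe
      exact ⟨n + 1, _, hfe⟩

lemma W_total (hμ : 0 < μ) (hμ1 : μ < 1) (hk : 0 < k) {w w' : ℕ → Hnat}
    (hw : IsW μ k 1 w) (hw' : IsW μ k (-k ^ 2) w') (u : Hnat)
    (h1 : ∀ n, inner ℂ (w n) u = 0) (h2 : ∀ n, inner ℂ (w' n) u = 0) : u = 0 := by
  have hsym : (A0 μ k : Hnat →ₗ[ℂ] Hnat).IsSymmetric := by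
    intro x y
    show inner ℂ (A0 μ k x) y = inner ℂ x (A0 μ k y)
    rw [← adjoint_inner_right, ← star_eq_adjoint, star_A0]
  have hbot := ContinuousLinearMap.orthogonalComplement_iSup_eigenspaces_eq_bot
    (T := A0 μ k) (A0_compact hμ hμ1).1 hsym
  have hmem : u ∈ (⨆ l, Module.End.eigenspace (A0 μ k : Module.End ℂ Hnat) l)ᗮ := by
    rw [← Submodule.iInf_orthogonal, Submodule.mem_iInf]
    intro l
    rw [Submodule.mem_orthogonal]
    intro f hf
    have hf' : A0 μ k f = l • f := Module.End.mem_eigenspace_iff.1 hf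
    by_cases hf0 : f = 0
    · rw [hf0, inner_zero_left]
    have hev : Module.End.HasEigenvalue (A0 μ k : Module.End ℂ Hnat) l :=
      Module.End.hasEigenvalue_of_hasEigenvector ⟨hf, hf0⟩
    have hreal := hsym.conj_eigenvalue_eq_self hev
    obtain ⟨r, rfl⟩ : ∃ r : ℝ, (r : ℂ) = l := ⟨l.re, Complex.conj_eq_iff_re.1 hreal⟩
    have hr : r ≠ 0 := by
      rintro rfl
      apply hf0
      apply ker_A0 hμ hμ1 hk
      simpa using hf'
    obtain ⟨N, hN⟩ : ∃ N : ℕ, (1 + k ^ 2) < |r| / μ ^ (2 * N) := by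
      have hpos : 0 < |r| / (1 + k ^ 2) := by positivity
      obtain ⟨N, hN⟩ := exists_pow_lt_of_lt_one hpos
        (pow_lt_one₀ hμ.le hμ1 (n := 2) (by norm_num))
      refine ⟨N, ?_⟩
      rw [lt_div_iff₀ (by positivity)] at hN ⊢
      rw [pow_mul]; linarith
    rcases eig_cases hμ hμ1 hk hw hw' N r f hN hf' with h | ⟨n, z, h⟩ | ⟨n, z, h⟩
    · exact absurd h hf0
    · rw [h, inner_smul_left, h1, mul_zero]
    · rw [h, inner_smul_left, h2, mul_zero]
  rw [hbot] at hmem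
  exact (Submodule.mem_bot ℂ).1 hmem

lemma W_orth (hμ : 0 < μ) (hμ1 : μ < 1) {l : ℝ} (hl : l ≠ 0) {w : ℕ → Hnat} (hw : IsW μ k l w)
    {n m : ℕ} (h : n ≠ m) : inner ℂ (w n) (w m) = 0 := by
  apply eig_orth (hw.A n) (hw.A m)
  intro e
  have e1 := mul_left_cancel₀ hl e
  have := pow_right_injective₀ hμ hμ1.ne e1
  omega

lemma bw_pos_p (hμ : 0 < μ) (hμ1 : μ < 1) (hk : 0 < k) (n : ℕ) : 0 < bw μ k 1 n := by
  apply Real.sqrt_pos.2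
  obtain ⟨h1, h2⟩ := pow_lt' hμ hμ1 n
  rw [one_mul]
  have : 0 < 1 - μ ^ 2 * μ ^ (2 * n) := by linarith
  positivity

lemma bw_pos_m (hμ : 0 < μ) (hμ1 : μ < 1) (hk : 0 < k) (n : ℕ) : 0 < bw μ k (-k ^ 2) n := by
  apply Real.sqrt_pos.2
  obtain ⟨h1, h2⟩ := pow_lt' hμ hμ1 n
  have e : (1 - μ ^ 2 * (-k ^ 2 * μ ^ (2 * n))) * (k ^ 2 + μ ^ 2 * (-k ^ 2 * μ ^ (2 * n)))
    = (1 + k ^ 2 * (μ ^ 2 * μ ^ (2 * n))) * (k ^ 2 * (1 - μ ^ 2 * μ ^ (2 * n))) := by ring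
  rw [e]
  have : 0 < 1 - μ ^ 2 * μ ^ (2 * n) := by linarith
  positivity

lemma lam_tendsto (hμ : 0 < μ) (hμ1 : μ < 1) (l : ℝ) :
    Tendsto (fun n : ℕ => l * μ ^ (2 * n)) atTop (𝓝 0) := by
  have := (tendsto_pow_atTop_nhds_zero_of_lt_one (r := μ ^ 2) (by positivity)
      (pow_lt_one₀ hμ.le hμ1 (by norm_num))).const_mul l
  rw [mul_zero] at this
  simpa only [pow_mul] using this

lemma bw_tendsto (hμ : 0 < μ) (hμ1 : μ < 1) (hk : 0 < k) (l : ℝ) :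
    Tendsto (fun n => ((bw μ k l n : ℝ) : ℂ)) atTop (𝓝 (k : ℂ)) := by
  refine (Complex.continuous_ofReal.tendsto k).comp ?_
  have h := lam_tendsto hμ hμ1 l
  have h2 := (((h.const_mul (μ ^ 2)).const_sub 1).mul ((h.const_mul (μ ^ 2)).const_add (k ^ 2))).sqrt
  rw [mul_zero, sub_zero, add_zero, one_mul, Real.sqrt_sq hk.le] at h2
  exact h2

end eig

end Pod

namespace Pod

open ContinuousLinearMap Filter Topology

lemma idx_inj (m : ℤ) : Function.Injective (fun j : ℕ => ((m - 2 * (j : ℤ), j) : ℤ × ℕ)) := by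
  intro a b h
  exact (Prod.mk.inj h).2

/-- embedding of ℓ²(ℕ) as a slice -/
def II (m : ℤ) : Hnat →L[ℂ] HC := emb (fun j : ℕ => ((m - 2 * (j : ℤ), j) : ℤ × ℕ)) (idx_inj m)

lemma II_bv (m : ℤ) (j : ℕ) : II m (bv j) = ec (m - 2 * j) j := emb_bv _ _ _

lemma II_bv' (a : ℤ) (j : ℕ) : (bv (a, j) : HC) = II (a + 2 * j) (bv j) := by
  rw [II_bv, add_sub_cancel_right]; rfl

lemma inner_II_self (m : ℤ) (f g : Hnat) : inner ℂ (II m f) (II m g) = inner ℂ f g := by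
  rw [← adjoint_inner_right]
  have := congrArg (fun T : BB => T g) (adj_emb _ (idx_inj m))
  have h2 : adjoint (II m) (II m g) = g := this
  rw [h2]

lemma adj_II_ne {a b : ℤ} (h : a ≠ b) : adjoint (II a) ∘L II b = 0 := by
  apply clm_ext; intro j
  rw [comp_apply, II_bv]
  refine adj_emb_bv_not _ _ _ ?_
  intro i hi
  obtain ⟨h1, h2⟩ := Prod.mk.inj hi
  subst h2
  apply h; linarith

lemma inner_II_ne {a b : ℤ} (h : a ≠ b) (f g : Hnat) : inner ℂ (II a f) (II b g) = 0 := by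
  rw [← adjoint_inner_right]
  have := congrArg (fun T : BB => T g) (adj_II_ne h)
  have h2 : adjoint (II a) (II b g) = 0 := this
  rw [h2, inner_zero_right]

lemma star_II {x : HC →L[ℂ] HC} {X : BB} {d : ℤ} (h : ∀ m, x ∘L II m = II (m + d) ∘L X) (m : ℤ) :
    star x ∘L II m = II (m - d) ∘L star X := by
  ext1 f
  apply l2_ext
  rintro ⟨a, j⟩
  rw [← inner_bv, ← inner_bv, II_bv', comp_apply, comp_apply, star_eq_adjoint, adjoint_inner_right]
  have := congrArg (fun T : Hnat →L[ℂ] HC => T (bv j)) (h (a + 2 * j))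
  simp only [comp_apply] at this
  rw [this]
  by_cases hm : a + 2 * j + d = m
  · rw [hm, inner_II_self, ← hm, add_sub_cancel_right, inner_II_self, star_eq_adjoint,
      adjoint_inner_right]
  · rw [inner_II_ne hm, inner_II_ne (fun h => hm (by linarith))]

lemma al_bv_zero {μ : ℝ} (hμ : 0 < μ) : al μ (bv 0) = 0 := by
  rw [al, mapp, sd, dg_bv (sw_bd hμ), map_smul, starV_bv_zero, smul_zero]

lemma al_bv_succ {μ : ℝ} (hμ : 0 < μ) (j : ℕ) : al μ (bv (j + 1)) = (sw_ μ (j + 1) : ℂ) • bv j := by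
  rw [al, mapp, sd, dg_bv (sw_bd hμ), map_smul, starV_bv_succ]

lemma star_al_bv {μ : ℝ} (hμ : 0 < μ) (j : ℕ) :
    star (al μ) (bv j) = (sw_ μ (j + 1) : ℂ) • bv (j + 1) := by
  rw [star_al hμ, mapp, V_bv, sd, dg_bv (sw_bd hμ)]

lemma gm_bv {μ : ℝ} (hμ : 0 < μ) (hμ1 : μ < 1) (j : ℕ) :
    gm μ (bv j) = ((μ ^ j : ℝ) : ℂ) • bv j := by
  rw [gm, dg_bv (gm_bd hμ hμ1)]

lemma rsmul (r : ℝ) (y : HC) : r • y = (r : ℂ) • y := by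
  apply l2_ext
  intro i
  rw [lp.coeFn_smul]
  exact Complex.real_smul

lemma zpow1 {q : ℝ} (j : ℕ) : q ^ (-2 * ((j : ℤ) + 1)) = (q⁻¹) ^ (2 * (j + 1)) := by
  rw [inv_pow, ← zpow_natCast, ← zpow_neg]
  congr 1

lemma zpow2 {q : ℝ} (j : ℕ) : q ^ (-(j : ℤ)) = (q⁻¹) ^ j := by
  rw [inv_pow, ← zpow_natCast, ← zpow_neg]

section lift
variable {q c : ℝ} {x : Fin 2 → (HC →L[ℂ] HC)}

lemma x0_II (hq : 1 < q) (hx : IsXPair q c x) (m : ℤ) :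
    x 0 ∘L II m = II (m + (-1)) ∘L X1 q⁻¹ (Real.sqrt c) := by
  have hμ : 0 < q⁻¹ := by positivity
  have hμ1 : q⁻¹ < 1 := inv_lt_one_of_one_lt₀ hq
  obtain ⟨h1, h2, -⟩ := hx
  apply clm_ext; intro j
  rw [comp_apply, comp_apply, II_bv, X1, add_apply, smul_apply]
  rcases j with _ | j
  · rw [al_bv_zero hμ, gm_bv hμ hμ1, h1]
    simp only [smul_zero, zero_add, pow_zero, Complex.ofReal_one, one_smul, II_bv]
    congr 1; push_cast; ring
  · rw [al_bv_succ hμ, gm_bv hμ hμ1, h2, zpow1, map_add, map_smul, map_smul, map_smul, II_bv,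
      II_bv, rsmul, rsmul, smul_smul]
    have e := zpow2 (q := q) (j + 1)
    push_cast at e
    rw [e]
    have e1 : m - 2 * ((j + 1 : ℕ) : ℤ) + 1 = m + -1 - 2 * (j : ℤ) := by push_cast; ring
    have e2 : m - 2 * ((j + 1 : ℕ) : ℤ) - 1 = m + -1 - 2 * ((j + 1 : ℕ) : ℤ) := by ring
    rw [e1, e2, Complex.ofReal_mul]; rfl

lemma x1_II (hq : 1 < q) (hx : IsXPair q c x) (m : ℤ) :
    x 1 ∘L II m = II (m + 1) ∘L X2 q⁻¹ (Real.sqrt c) := by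
  have hμ : 0 < q⁻¹ := by positivity
  have hμ1 : q⁻¹ < 1 := inv_lt_one_of_one_lt₀ hq
  obtain ⟨-, -, h3⟩ := hx
  apply clm_ext; intro j
  rw [comp_apply, comp_apply, II_bv, X2, sub_apply, smul_apply, star_al_bv hμ, gm_bv hμ hμ1, h3,
    zpow1, zpow2, map_sub, map_smul, map_smul, map_smul, II_bv, II_bv, rsmul, rsmul, smul_smul]
  have e1 : m - 2 * (j : ℤ) + 1 = m + 1 - 2 * (j : ℤ) := by ring
  have e2 : m - 2 * (j : ℤ) - 1 = m + 1 - 2 * ((j + 1 : ℕ) : ℤ) := by push_cast; ring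
  rw [e1, e2, sw_]
  push_cast
  module

lemma comp4 {a b : HC →L[ℂ] HC} {A B : BB} {m m' m'' : ℤ} (h : b ∘L II m = II m' ∘L B)
    (h' : a ∘L II m' = II m'' ∘L A) : (a * b) ∘L II m = II m'' ∘L (A * B) := by
  show (a ∘L b) ∘L II m = II m'' ∘L (A ∘L B)
  rw [comp_assoc, h, ← comp_assoc, h', comp_assoc]

lemma g00_II (hq : 1 < q) (hx : IsXPair q c x) (m : ℤ) : (star (x 0) * x 0) ∘L II m =
    II m ∘L (star (X1 q⁻¹ (Real.sqrt c)) * X1 q⁻¹ (Real.sqrt c)) := by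
  refine comp4 (x0_II hq hx m) ?_
  convert star_II (x0_II hq hx) (m + -1) using 3; ring

lemma g01_II (hq : 1 < q) (hx : IsXPair q c x) (m : ℤ) : (star (x 0) * x 1) ∘L II m =
    II (m + 2) ∘L (B0 q⁻¹ (Real.sqrt c)) := by
  refine comp4 (x1_II hq hx m) ?_
  convert star_II (x0_II hq hx) (m + 1) using 3; ring

lemma g10_II (hq : 1 < q) (hx : IsXPair q c x) (m : ℤ) : (star (x 1) * x 0) ∘L II m =
    II (m - 2) ∘L (star (B0 q⁻¹ (Real.sqrt c))) := by
  rw [star_B0]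
  refine comp4 (x0_II hq hx m) ?_
  convert star_II (x1_II hq hx) (m + -1) using 3; ring

lemma g11_II (hq : 1 < q) (hx : IsXPair q c x) (m : ℤ) : (star (x 1) * x 1) ∘L II m =
    II m ∘L (star (X2 q⁻¹ (Real.sqrt c)) * X2 q⁻¹ (Real.sqrt c)) := by
  refine comp4 (x1_II hq hx m) ?_
  convert star_II (x1_II hq hx) (m + 1) using 3; ring

lemma J_ON {μ k l : ℝ} {w : ℕ → Hnat} (hw : IsW μ k l w) (m : ℤ) :
    Orthonormal ℂ (fun n : ℕ => II (m + 2 * n) (w n)) := by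
  rw [orthonormal_iff_ite]
  intro i j
  by_cases hij : i = j
  · subst hij
    rw [if_pos rfl, inner_II_self, inner_self_eq_norm_sq_to_K, hw.norm]; simp
  · rw [if_neg hij]
    exact inner_II_ne (by omega) _ _

/-- the intertwining isometries -/
def JJ {μ k l : ℝ} {w : ℕ → Hnat} (hw : IsW μ k l w) (m : ℤ) : Hnat →L[ℂ] HC :=
  ofON _ (J_ON hw m)

lemma JJ_bv {μ k l : ℝ} {w : ℕ → Hnat} (hw : IsW μ k l w) (m : ℤ) (n : ℕ) :
    JJ hw m (bv n) = II (m + 2 * n) (w n) := ofON_bv _ _ _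

lemma adj_JJ {μ k l : ℝ} {w : ℕ → Hnat} (hw : IsW μ k l w) (m : ℤ) :
    adjoint (JJ hw m) ∘L JJ hw m = 1 := adj_ofON _ _

lemma lam_bd {μ : ℝ} (hμ : 0 < μ) (hμ1 : μ < 1) (l a b : ℝ) :
    ∃ C : ℝ, ∀ n : ℕ, ‖((a + b * (l * μ ^ (2 * n)) : ℝ) : ℂ)‖ ≤ C := by
  have h := ((lam_tendsto hμ hμ1 l).const_mul b).const_add a
  have h2 := (Complex.continuous_ofReal.tendsto _).comp h
  obtain ⟨C, -, hC⟩ := bounded_of_tendsto h2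
  exact ⟨C, hC⟩

lemma bw_bd {μ k : ℝ} (hμ : 0 < μ) (hμ1 : μ < 1) (hk : 0 < k) (l : ℝ) :
    ∃ C : ℝ, ∀ n : ℕ, ‖((bw μ k l n : ℝ) : ℂ)‖ ≤ C := by
  obtain ⟨C, -, hC⟩ := bounded_of_tendsto (bw_tendsto hμ hμ1 hk l)
  exact ⟨C, hC⟩

/-- images of the generators -/
def GG (μ k l : ℝ) : Fin 2 → Fin 2 → BB :=
  ![![dg (fun n => ((k ^ 2 + 1 * (l * μ ^ (2 * n)) : ℝ) : ℂ)),
      V * dg (fun n => ((bw μ k l n : ℝ) : ℂ))],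
    ![star (V * dg (fun n => ((bw μ k l n : ℝ) : ℂ))),
      dg (fun n => ((1 + (-μ ^ 2) * (l * μ ^ (2 * n)) : ℝ) : ℂ))]]

lemma JJ_g (hq : 1 < q) (hc : 0 < c) (hx : IsXPair q c x) {l : ℝ} {w : ℕ → Hnat}
    (hw : IsW q⁻¹ (Real.sqrt c) l w) (m : ℤ) (i j : Fin 2) :
    (star (x i) * x j) ∘L JJ hw m = JJ hw m ∘L GG q⁻¹ (Real.sqrt c) l i j := by
  have hμ : 0 < q⁻¹ := by positivity
  have hμ1 : q⁻¹ < 1 := inv_lt_one_of_one_lt₀ hq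
  have hk : 0 < Real.sqrt c := Real.sqrt_pos.2 hc
  obtain ⟨C, hC⟩ := bw_bd hμ hμ1 hk l
  obtain ⟨C1, hC1⟩ := lam_bd hμ hμ1 l (Real.sqrt c ^ 2) 1
  obtain ⟨C2, hC2⟩ := lam_bd hμ hμ1 l 1 (-q⁻¹ ^ 2)
  apply clm_ext; intro n
  rw [comp_apply, comp_apply, JJ_bv, ← comp_apply]
  fin_cases i <;> fin_cases j
  · simp only [GG, Fin.zero_eta, Matrix.cons_val_zero, Matrix.cons_val', Matrix.cons_val_fin_one]
    rw [g00_II hq hx, dg_bv hC1, map_smul, JJ_bv, comp_apply, ← map_smul]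
    congr 1
    rw [X1X1, add_apply, hw.A, smul_apply, one_app]
    push_cast; module
  · simp only [GG, Fin.zero_eta, Fin.mk_one, Matrix.cons_val_zero, Matrix.cons_val_one,
      Matrix.cons_val', Matrix.cons_val_fin_one]
    rw [g01_II hq hx, mapp, dg_bv hC, map_smul, map_smul, V_bv, JJ_bv, comp_apply, hw.B, map_smul]
    congr 3; push_cast; ring
  · simp only [GG, Fin.zero_eta, Fin.mk_one, Matrix.cons_val_zero, Matrix.cons_val_one,
      Matrix.cons_val', Matrix.cons_val_fin_one]
    rw [g10_II hq hx, star_mul, mapp, star_dg hC, comp_apply]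
    rcases n with _ | n
    · rw [starV_bv_zero, map_zero, map_zero, hw.Bs0, map_zero]
    · have hC' : ∀ i, ‖star ((bw q⁻¹ (Real.sqrt c) l i : ℝ) : ℂ)‖ ≤ C := by
        intro i; rw [norm_star]; exact hC i
      rw [starV_bv_succ, dg_bv hC', map_smul, JJ_bv, hw.Bs, map_smul]
      have e : m + 2 * ((n + 1 : ℕ) : ℤ) - 2 = m + 2 * (n : ℤ) := by push_cast; ring
      rw [e]
      congr 1
      simp
  · simp only [GG, Fin.mk_one, Matrix.cons_val_one,
      Matrix.cons_val', Matrix.cons_val_fin_one]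
    rw [g11_II hq hx, dg_bv hC2, map_smul, JJ_bv, comp_apply, ← map_smul]
    congr 1
    rw [R2 hμ hμ1, sub_apply, smul_apply, hw.A, one_app]
    push_cast; module

lemma JJ_total {μ k : ℝ} (hμ : 0 < μ) (hμ1 : μ < 1) (hk : 0 < k) {w w' : ℕ → Hnat}
    (hw : IsW μ k 1 w) (hw' : IsW μ k (-k ^ 2) w') (u : HC)
    (h1 : ∀ m n, inner ℂ (JJ hw m (bv n)) u = 0)
    (h2 : ∀ m n, inner ℂ (JJ hw' m (bv n)) u = 0) : u = 0 := by
  have key : ∀ M, adjoint (II M) u = 0 := by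
    intro M
    apply W_total hμ hμ1 hk hw hw'
    · intro n
      rw [adjoint_inner_right]
      have := h1 (M - 2 * n) n
      rwa [JJ_bv, sub_add_cancel] at this
    · intro n
      rw [adjoint_inner_right]
      have := h2 (M - 2 * n) n
      rwa [JJ_bv, sub_add_cancel] at this
  apply l2_ext
  rintro ⟨a, j⟩
  rw [← inner_bv, II_bv', ← adjoint_inner_right, key, inner_zero_right]
  rfl

/-- symbols of the generators -/
def symb (k : ℝ) : Fin 2 → Fin 2 → C(Circle, ℂ) :=
  ![![((k ^ 2 : ℝ) : ℂ) • 1, (k : ℂ) • zc], ![star ((k : ℂ) • zc), ((1 : ℝ) : ℂ) • 1]]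

lemma GG_R {μ k : ℝ} (hμ : 0 < μ) (hμ1 : μ < 1) (hk : 0 < k) (l : ℝ) (i j : Fin 2) :
    (GG μ k l i j, symb k i j) ∈ R := by
  have hd : ∀ a b : ℝ, Tendsto (fun n : ℕ => ((a + b * (l * μ ^ (2 * n)) : ℝ) : ℂ)) atTop
      (𝓝 (a : ℂ)) := by
    intro a b
    have h := ((lam_tendsto hμ hμ1 l).const_mul b).const_add a
    rw [mul_zero, add_zero] at h
    exact (Complex.continuous_ofReal.tendsto _).comp h
  fin_cases i <;> fin_cases j
  · exact R_dg (hd _ _)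
  · exact R_V (bw_tendsto hμ hμ1 hk l)
  · show star (V * dg (fun n => ((bw μ k l n : ℝ) : ℂ))) - toep (star ((k : ℂ) • zc)) ∈
      compactOps Hnat
    rw [← star_toep, ← star_sub]
    exact star_mem (mem_R.1 (R_V (bw_tendsto hμ hμ1 hk l)))
  · exact R_dg (hd _ _)

end lift

end Pod

namespace Pod

open ContinuousLinearMap Filter Topology

/-- Compression. -/
def PP (T : Hnat →L[ℂ] HC) (a : HC →L[ℂ] HC) : BB := adjoint T ∘L a ∘L T

lemma PP_eq {T : Hnat →L[ℂ] HC} (hT : adjoint T ∘L T = 1) {a : HC →L[ℂ] HC} {G : BB}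
    (h : a ∘L T = T ∘L G) : PP T a = G := by
  rw [PP, h, ← comp_assoc, hT]
  exact one_mul G

lemma PP_star (T : Hnat →L[ℂ] HC) (a : HC →L[ℂ] HC) : PP T (star a) = star (PP T a) := by
  simp only [PP, star_eq_adjoint, adjoint_comp, adjoint_adjoint, comp_assoc]

lemma PP_add (T : Hnat →L[ℂ] HC) (a b : HC →L[ℂ] HC) : PP T (a + b) = PP T a + PP T b := by
  simp only [PP, add_comp, comp_add]

lemma PP_smul (T : Hnat →L[ℂ] HC) (z : ℂ) (a : HC →L[ℂ] HC) : PP T (z • a) = z • PP T a := by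
  simp only [PP, smul_comp, comp_smul]

lemma PP_one {T : Hnat →L[ℂ] HC} (hT : adjoint T ∘L T = 1) : PP T 1 = 1 := hT

lemma PP_cont (T : Hnat →L[ℂ] HC) : Continuous (PP T) := by
  unfold PP; fun_prop

section
variable (J : Bool → ℤ → (Hnat →L[ℂ] HC))

/-- a intertwines. -/
def Int (a : HC →L[ℂ] HC) : Prop := ∀ s m, a ∘L J s m = J s m ∘L PP (J s 0) a

variable {J} (hJ : ∀ s m, adjoint (J s m) ∘L J s m = 1)

lemma Int.of {a : HC →L[ℂ] HC} (G : Bool → BB) (hJ : ∀ s m, adjoint (J s m) ∘L J s m = 1)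
    (h : ∀ s m, a ∘L J s m = J s m ∘L G s) : Int J a := by
  intro s m
  rw [PP_eq (hJ s 0) (h s 0), h]

lemma Int.PP_mul {a b : HC →L[ℂ] HC} (ha : Int J a) (hb : Int J b)
    (hJ : ∀ s m, adjoint (J s m) ∘L J s m = 1) (s : Bool) :
    PP (J s 0) (a * b) = PP (J s 0) a * PP (J s 0) b := by
  apply PP_eq (hJ s 0)
  rw [mul_def, mul_def, comp_assoc, hb, ← comp_assoc, ha, comp_assoc]

lemma Int.mul {a b : HC →L[ℂ] HC} (ha : Int J a) (hb : Int J b)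
    (hJ : ∀ s m, adjoint (J s m) ∘L J s m = 1) : Int J (a * b) := by
  intro s m
  rw [ha.PP_mul hb hJ, mul_def, mul_def, comp_assoc, hb, ← comp_assoc, ha, comp_assoc]

lemma Int.add {a b : HC →L[ℂ] HC} (ha : Int J a) (hb : Int J b) : Int J (a + b) := by
  intro s m
  rw [PP_add, add_comp, comp_add, ha, hb]

lemma Int.smul_one (hJ : ∀ s m, adjoint (J s m) ∘L J s m = 1) (z : ℂ) :
    Int J (z • (1 : HC →L[ℂ] HC)) := by
  apply Int.of (fun _ => z • 1) hJ
  intro s m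
  rw [smul_comp, comp_smul]; rfl

lemma Int_closed : IsClosed {a | Int J a} := by
  have : {a | Int J a} = ⋂ s, ⋂ m, {a | a ∘L J s m = J s m ∘L PP (J s 0) a} := by
    ext a; simp [Int]
  rw [this]
  refine isClosed_iInter fun s => isClosed_iInter fun m => isClosed_eq ?_ ?_
  · fun_prop
  · have := PP_cont (J s 0); fun_prop

/-- The star algebra of intertwiners. -/
def WW (hJ : ∀ s m, adjoint (J s m) ∘L J s m = 1) : StarSubalgebra ℂ (HC →L[ℂ] HC) where
  carrier := {a | Int J a ∧ Int J (star a)}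
  mul_mem' := by
    rintro a b ⟨h1, h2⟩ ⟨h3, h4⟩
    refine ⟨h1.mul h3 hJ, ?_⟩
    rw [star_mul]; exact h4.mul h2 hJ
  add_mem' := by
    rintro a b ⟨h1, h2⟩ ⟨h3, h4⟩
    refine ⟨h1.add h3, ?_⟩
    rw [star_add]; exact h2.add h4
  algebraMap_mem' := by
    intro z
    simp only [Set.mem_ofPred_eq, Algebra.algebraMap_eq_smul_one, star_smul, star_one]
    exact ⟨Int.smul_one hJ _, Int.smul_one hJ _⟩
  star_mem' := by
    rintro a ⟨h1, h2⟩
    refine ⟨h2, ?_⟩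
    rw [star_star]; exact h1

lemma WW_closed (hJ : ∀ s m, adjoint (J s m) ∘L J s m = 1) :
    IsClosed (WW hJ : Set (HC →L[ℂ] HC)) :=
  Int_closed.inter (Int_closed.preimage continuous_star)

lemma Cqc_le (hJ : ∀ s m, adjoint (J s m) ∘L J s m = 1) {x : Fin 2 → (HC →L[ℂ] HC)}
    (G : Bool → Fin 2 → Fin 2 → BB)
    (h : ∀ s m i j, (star (x i) * x j) ∘L J s m = J s m ∘L G s i j) : Cqc x ≤ WW hJ := by
  apply StarSubalgebra.topologicalClosure_minimal _ (WW_closed hJ)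
  apply StarAlgebra.adjoin_le
  rintro a ⟨i, j, rfl⟩
  refine ⟨Int.of (fun s => G s i j) hJ (fun s m => h s m i j), ?_⟩
  rw [star_mul, star_star]
  exact Int.of (fun s => G s j i) hJ (fun s m => h s m j i)

/-- The representation. -/
def psi (hJ : ∀ s m, adjoint (J s m) ∘L J s m = 1) {C : StarSubalgebra ℂ (HC →L[ℂ] HC)}
    (hC : C ≤ WW hJ) : C →⋆ₐ[ℂ] BB × BB where
  toFun a := (PP (J true 0) a, PP (J false 0) a)
  map_one' := Prod.ext (PP_one (hJ _ _)) (PP_one (hJ _ _))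
  map_mul' a b := Prod.ext ((hC a.2).1.PP_mul (hC b.2).1 hJ true)
    ((hC a.2).1.PP_mul (hC b.2).1 hJ false)
  map_zero' := by
    have h : ∀ T : Hnat →L[ℂ] HC, PP T 0 = 0 := by intro T; simp [PP]
    exact Prod.ext (h _) (h _)
  map_add' a b := Prod.ext (PP_add _ _ _) (PP_add _ _ _)
  commutes' z := by
    have h : ∀ s, PP (J s 0) (z • 1) = z • 1 := by
      intro s; rw [PP_smul, PP_one (hJ _ _)]
    rw [Algebra.algebraMap_eq_smul_one, Algebra.algebraMap_eq_smul_one]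
    exact Prod.ext (h _) (h _)
  map_star' a := Prod.ext (PP_star _ _) (PP_star _ _)

lemma psi_inj (hJ : ∀ s m, adjoint (J s m) ∘L J s m = 1) {C : StarSubalgebra ℂ (HC →L[ℂ] HC)}
    (hC : C ≤ WW hJ) (ht : ∀ u : HC, (∀ s m n, inner ℂ (J s m (bv n)) u = 0) → u = 0) :
    Function.Injective (psi hJ hC) := by
  rw [injective_iff_map_eq_zero]
  intro a ha
  have h0 : ∀ s, PP (J s 0) a = 0 := by
    intro s
    cases s
    · exact congrArg Prod.snd ha
    · exact congrArg Prod.fst ha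
  apply Subtype.ext
  have hs : star (a : HC →L[ℂ] HC) = 0 := by
    ext1 u
    apply ht
    intro s m n
    rw [star_eq_adjoint, adjoint_inner_right, ← comp_apply, (hC a.2).1 s m, h0 s, comp_zero]
    exact inner_zero_left _
  exact star_eq_zero.1 hs

end

lemma R_star {T : BB} {f : C(Circle, ℂ)} (h : (T, f) ∈ R) : (star T, star f) ∈ R := by
  rw [mem_R] at *
  rw [← star_toep, ← star_sub]
  exact star_mem h

/-- first coordinate map -/
def pr1 : (BB × BB) × C(Circle, ℂ) →⋆ₐ[ℂ] BB × C(Circle, ℂ) :=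
  StarAlgHom.prod ((StarAlgHom.fst ℂ BB BB).comp (StarAlgHom.fst ℂ (BB × BB) C(Circle, ℂ)))
    (StarAlgHom.snd ℂ (BB × BB) C(Circle, ℂ))

/-- second coordinate map -/
def pr2 : (BB × BB) × C(Circle, ℂ) →⋆ₐ[ℂ] BB × C(Circle, ℂ) :=
  StarAlgHom.prod ((StarAlgHom.snd ℂ BB BB).comp (StarAlgHom.fst ℂ (BB × BB) C(Circle, ℂ)))
    (StarAlgHom.snd ℂ (BB × BB) C(Circle, ℂ))

lemma pr1_apply (p : (BB × BB) × C(Circle, ℂ)) : pr1 p = (p.1.1, p.2) := rfl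
lemma pr2_apply (p : (BB × BB) × C(Circle, ℂ)) : pr2 p = (p.1.2, p.2) := rfl

/-- Pairs with symbol. -/
def QQ : StarSubalgebra ℂ ((BB × BB) × C(Circle, ℂ)) := R.comap pr1 ⊓ R.comap pr2

lemma mem_QQ {p : (BB × BB) × C(Circle, ℂ)} :
    p ∈ QQ ↔ (p.1.1, p.2) ∈ R ∧ (p.1.2, p.2) ∈ R := by
  rw [QQ, StarSubalgebra.mem_inf, StarSubalgebra.mem_comap, StarSubalgebra.mem_comap, pr1_apply,
    pr2_apply]

lemma QQ_closed : IsClosed (QQ : Set ((BB × BB) × C(Circle, ℂ))) := by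
  have h1 : Continuous (fun p : (BB × BB) × C(Circle, ℂ) => (p.1.1, p.2)) := by fun_prop
  have h2 : Continuous (fun p : (BB × BB) × C(Circle, ℂ) => (p.1.2, p.2)) := by fun_prop
  have h := (R_closed.preimage h1).inter (R_closed.preimage h2)
  convert h using 1
  ext p
  exact mem_QQ

instance : IsClosed (QQ : Set ((BB × BB) × C(Circle, ℂ))) := QQ_closed

/-- projection -/
def prQ : QQ →⋆ₐ[ℂ] BB × BB where
  toFun p := p.1.1
  map_one' := rfl
  map_mul' _ _ := rfl
  map_zero' := rfl
  map_add' _ _ := rfl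
  commutes' _ := rfl
  map_star' _ := rfl

lemma prQ_inj : Function.Injective prQ := by
  rintro ⟨⟨p, f⟩, h⟩ ⟨⟨p', f'⟩, h'⟩ e
  have e' : p = p' := e
  subst e'
  have := R_unique (mem_QQ.1 h).1 (mem_QQ.1 h').1
  subst this
  rfl

lemma prQ_isom : Isometry prQ := NonUnitalStarAlgHom.isometry prQ prQ_inj

lemma prQ_range : IsClosed (Set.range prQ) :=
  prQ_isom.isClosedEmbedding.isClosed_range

lemma mem_range_prQ {p : BB × BB} :
    p ∈ Set.range prQ ↔ ∃ f, (p.1, f) ∈ R ∧ (p.2, f) ∈ R := by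
  constructor
  · rintro ⟨⟨⟨p, f⟩, h⟩, rfl⟩
    exact ⟨f, mem_QQ.1 h⟩
  · rintro ⟨f, h⟩
    exact ⟨⟨(p, f), mem_QQ.2 h⟩, rfl⟩

end Pod

namespace Pod

open ContinuousLinearMap Filter Topology

lemma R_mul {T T' : BB} {f g : C(Circle, ℂ)} (h : (T, f) ∈ R) (h' : (T', g) ∈ R) :
    (T * T', f * g) ∈ R := by
  have h1 := mul_mem h h'
  rwa [Prod.mk_mul_mk] at h1

lemma R_add {T T' : BB} {f g : C(Circle, ℂ)} (h : (T, f) ∈ R) (h' : (T', g) ∈ R) :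
    (T + T', f + g) ∈ R := by
  have h1 := add_mem h h'
  rwa [Prod.mk_add_mk] at h1

lemma R_one : ((1 : BB), (1 : C(Circle, ℂ))) ∈ R := one_mem R
lemma R_zero : ((0 : BB), (0 : C(Circle, ℂ))) ∈ R := zero_mem R
lemma R_alg (z : ℂ) : (algebraMap ℂ BB z, algebraMap ℂ C(Circle, ℂ) z) ∈ R := R.algebraMap_mem z

section
variable {C : StarSubalgebra ℂ (HC →L[ℂ] HC)} (ψ : C →⋆ₐ[ℂ] BB × BB)

/-- The symbol map. -/
def phi (s : C → C(Circle, ℂ)) (hs : ∀ a, ((ψ a).1, s a) ∈ R ∧ ((ψ a).2, s a) ∈ R) : C →⋆ₐ[ℂ] C(Circle, ℂ) where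
  toFun a := s a
  map_one' := by
    have h := (hs 1).1
    rw [map_one] at h
    exact R_unique h R_one
  map_zero' := by
    have h := (hs 0).1
    rw [map_zero] at h
    exact R_unique h R_zero
  map_mul' a b := by
    have h := (hs (a * b)).1
    rw [map_mul, Prod.fst_mul] at h
    exact R_unique h (R_mul (hs a).1 (hs b).1)
  map_add' a b := by
    have h := (hs (a + b)).1
    rw [map_add, Prod.fst_add] at h
    exact R_unique h (R_add (hs a).1 (hs b).1)
  commutes' z := by
    have h := (hs (algebraMap ℂ C z)).1
    have e : ψ (algebraMap ℂ C z) = (algebraMap ℂ BB z, algebraMap ℂ BB z) := by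
      rw [AlgHomClass.commutes]; rfl
    rw [e] at h
    exact R_unique h (R_alg z)
  map_star' a := by
    have h := (hs (star a)).1
    have e : ψ (star a) = (star (ψ a).1, star (ψ a).2) := by
      rw [map_star]; rfl
    rw [e] at h
    exact R_unique h (R_star (hs a).1)

variable {ψ} {s : C → C(Circle, ℂ)} (hs : ∀ a, ((ψ a).1, s a) ∈ R ∧ ((ψ a).2, s a) ∈ R)

lemma phi_spec (a : C) : ((ψ a).1, phi ψ s hs a) ∈ R ∧ ((ψ a).2, phi ψ s hs a) ∈ R :=
  hs a

lemma phi_eq {a : C} {f : C(Circle, ℂ)} (h : ((ψ a).1, f) ∈ R) : phi ψ s hs a = f :=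
  R_unique (phi_spec hs a).1 h

lemma ker_mem {a : C} (h : phi ψ s hs a = 0) :
    (ψ a).1 ∈ compactOps Hnat ∧ (ψ a).2 ∈ compactOps Hnat := by
  have := phi_spec hs a
  rw [h, mem_R, mem_R, toep_zero, sub_zero, sub_zero] at this
  exact this

lemma mem_ker {a : C} (h : (ψ a).1 ∈ compactOps Hnat) : phi ψ s hs a = 0 := by
  apply phi_eq
  rw [mem_R, toep_zero, sub_zero]
  exact h

/-- the kernel map -/
def kmap (a : starAlgHomKer (phi ψ s hs)) : ↥(compactOps Hnat) × ↥(compactOps Hnat) :=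
  (⟨(ψ a.1).1, (ker_mem hs a.2).1⟩, ⟨(ψ a.1).2, (ker_mem hs a.2).2⟩)

lemma kmap_bij (hinj : Function.Injective ψ)
    (hK : ∀ K ∈ compactOps Hnat, ∀ K' ∈ compactOps Hnat, ∃ a, ψ a = (K, K')) :
    Function.Bijective (kmap hs) := by
  constructor
  · intro a b h
    apply Subtype.ext
    apply hinj
    have h1 := congrArg (fun p => (p.1 : BB)) h
    have h2 := congrArg (fun p => (p.2 : BB)) h
    exact Prod.ext h1 h2
  · rintro ⟨⟨K, hk⟩, ⟨K', hk'⟩⟩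
    obtain ⟨a, ha⟩ := hK K hk K' hk'
    have h1 : (ψ a).1 = K := by rw [ha]
    have h2 : (ψ a).2 = K' := by rw [ha]
    refine ⟨⟨a, mem_ker hs (by rw [h1]; exact hk)⟩, ?_⟩
    exact Prod.ext (Subtype.ext h1) (Subtype.ext h2)

/-- the kernel isomorphism -/
def kequiv (hinj : Function.Injective ψ)
    (hK : ∀ K ∈ compactOps Hnat, ∀ K' ∈ compactOps Hnat, ∃ a, ψ a = (K, K')) :
    (starAlgHomKer (phi ψ s hs)) ≃⋆ₐ[ℂ] (↥(compactOps Hnat) × ↥(compactOps Hnat)) :=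
  { Equiv.ofBijective _ (kmap_bij hs hinj hK) with
    map_mul' := fun a b => by
      have e : ψ (a.1 * b.1) = ((ψ a.1).1 * (ψ b.1).1, (ψ a.1).2 * (ψ b.1).2) := by
        rw [map_mul]; rfl
      exact Prod.ext (Subtype.ext (congrArg Prod.fst e)) (Subtype.ext (congrArg Prod.snd e))
    map_add' := fun a b => by
      have e : ψ (a.1 + b.1) = ((ψ a.1).1 + (ψ b.1).1, (ψ a.1).2 + (ψ b.1).2) := by
        rw [map_add]; rfl
      exact Prod.ext (Subtype.ext (congrArg Prod.fst e)) (Subtype.ext (congrArg Prod.snd e))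
    map_star' := fun a => by
      have e : ψ (star a.1) = (star (ψ a.1).1, star (ψ a.1).2) := by
        rw [map_star]; rfl
      exact Prod.ext (Subtype.ext (congrArg Prod.fst e)) (Subtype.ext (congrArg Prod.snd e))
    map_smul' := fun z a => by
      have e : ψ (z • a.1) = (z • (ψ a.1).1, z • (ψ a.1).2) := by
        rw [map_smul]; rfl
      exact Prod.ext (Subtype.ext (congrArg Prod.fst e)) (Subtype.ext (congrArg Prod.snd e)) }

lemma phi_surj
    (hT : ∀ f, ∃ a, ψ a = (toep f, toep f)) : Function.Surjective (phi ψ s hs) := by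
  intro f
  obtain ⟨a, ha⟩ := hT f
  refine ⟨a, phi_eq hs ?_⟩
  rw [ha, mem_R, sub_self]
  exact zero_mem _

end

section
variable {C : StarSubalgebra ℂ (HC →L[ℂ] HC)}

lemma psi_isom (hC : IsClosed (C : Set (HC →L[ℂ] HC))) (ψ : C →⋆ₐ[ℂ] BB × BB)
    (hinj : Function.Injective ψ) : Isometry ψ := by
  have := hC
  exact NonUnitalStarAlgHom.isometry ψ hinj

lemma psi_range_closed (hC : IsClosed (C : Set (HC →L[ℂ] HC))) (ψ : C →⋆ₐ[ℂ] BB × BB)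
    (hinj : Function.Injective ψ) : IsClosed (Set.range ψ) := by
  haveI : CompleteSpace C := hC.completeSpace_coe
  exact (psi_isom hC ψ hinj).isClosedEmbedding.isClosed_range

lemma symbol_exists {x : Fin 2 → (HC →L[ℂ] HC)} (ψ : Cqc x →⋆ₐ[ℂ] BB × BB)
    (hinj : Function.Injective ψ)
    (hg : ∀ i j, ∀ h : star (x i) * x j ∈ Cqc x, ψ ⟨_, h⟩ ∈ Set.range prQ) (a : Cqc x) :
    ∃ f, ((ψ a).1, f) ∈ R ∧ ((ψ a).2, f) ∈ R := by
  have hC : IsClosed (Cqc x : Set (HC →L[ℂ] HC)) := StarSubalgebra.isClosed_topologicalClosure _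
  rw [← mem_range_prQ]
  have hc : Continuous ψ := (psi_isom hC ψ hinj).continuous
  let T : StarSubalgebra ℂ (HC →L[ℂ] HC) := (prQ.range.comap ψ).map (Cqc x).subtype
  have hT : IsClosed (T : Set (HC →L[ℂ] HC)) := by
    have h1 : IsClosed (ψ ⁻¹' Set.range prQ) := prQ_range.preimage hc
    exact hC.isClosedEmbedding_subtypeVal.isClosedMap _ h1
  have hle : Cqc x ≤ T := by
    refine StarSubalgebra.topologicalClosure_minimal ?_ hT
    apply StarAlgebra.adjoin_le
    rintro _ ⟨i, j, rfl⟩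
    have hm : star (x i) * x j ∈ Cqc x :=
      StarSubalgebra.le_topologicalClosure _ (StarAlgebra.subset_adjoin _ _ ⟨i, j, rfl⟩)
    exact ⟨⟨_, hm⟩, hg i j hm, rfl⟩
  obtain ⟨b, hb, e⟩ := hle a.2
  have : b = a := Subtype.ext e
  rw [← this]; exact hb

end

end Pod

namespace Pod

open ContinuousLinearMap Filter Topology

lemma dd_bound {k t r a : ℝ} (ha : 0 ≤ a) (h : a ≤ r) (hk : 0 < k) (e : t = a / (1 + k ^ 2)) :
    ‖(t : ℂ)‖ ≤ r / (1 + k ^ 2) := by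
  have h1 : 0 < 1 + k ^ 2 := by positivity
  rw [Complex.norm_real, e, Real.norm_eq_abs, abs_of_nonneg (by positivity)]
  exact div_le_div_of_nonneg_right h h1.le

lemma K_mem {μ k : ℝ} (hμ : 0 < μ) (hμ1 : μ < 1) (hk : 0 < k)
    (A : StarSubalgebra ℂ (BB × BB)) (hA : IsClosed (A : Set (BB × BB)))
    (h : ∀ i j, (GG μ k 1 i j, GG μ k (-k ^ 2) i j) ∈ A) (K : BB) (hK : K ∈ compactOps Hnat)
    (K' : BB) (hK' : K' ∈ compactOps Hnat) : (K, K') ∈ A := by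
  have h1 : 0 < 1 + k ^ 2 := by positivity
  have hk2 : 0 < k ^ 2 := by positivity
  have hμ2 : μ ^ 2 < 1 := by nlinarith
  have hμ2' : 0 < μ ^ 2 := by positivity
  obtain ⟨C, hC⟩ := bw_bd hμ hμ1 hk 1
  obtain ⟨C', hC'⟩ := bw_bd hμ hμ1 hk (-k ^ 2)
  obtain ⟨C1, hC1⟩ := lam_bd hμ hμ1 1 (k ^ 2) 1
  obtain ⟨C2, hC2⟩ := lam_bd hμ hμ1 (-k ^ 2) (k ^ 2) 1
  have ht0 : ∀ n : ℕ, 0 < μ ^ (2 * n) := fun n => by positivity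
  have ht1 : ∀ n : ℕ, μ ^ (2 * n) ≤ 1 := fun n => pow_le_one₀ hμ.le hμ1.le
  have ht2 : ∀ n : ℕ, n ≠ 0 → μ ^ (2 * n) ≤ μ ^ 2 := fun n hn =>
    pow_le_pow_of_le_one hμ.le hμ1.le (by omega)
  obtain ⟨ε, hε, hε1, hε2⟩ : ∃ ε : ℝ, 0 < ε ∧ ε ≤ 1 - μ ^ 2 ∧ ε ≤ k ^ 2 * (1 - μ ^ 2) :=
    ⟨min (1 - μ ^ 2) (k ^ 2 * (1 - μ ^ 2)),
      lt_min (by linarith) (mul_pos hk2 (by linarith)), min_le_left _ _, min_le_right _ _⟩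
  have hε3 : ε ≤ k ^ 2 := by nlinarith
  let d : ℕ → ℂ := fun n => (((k ^ 2 + μ ^ (2 * n)) / (1 + k ^ 2) : ℝ) : ℂ)
  let d' : ℕ → ℂ := fun n => (((k ^ 2 - k ^ 2 * μ ^ (2 * n)) / (1 + k ^ 2) : ℝ) : ℂ)
  have hdb : ∀ n, ‖d n‖ ≤ (1 + k ^ 2) / (1 + k ^ 2) := fun n =>
    dd_bound (a := k ^ 2 + μ ^ (2 * n)) (by have := ht0 n; linarith)
      (by have := ht1 n; linarith) hk rfl
  have hd' : ∀ n, ‖d' n‖ ≤ (1 + k ^ 2 - ε) / (1 + k ^ 2) := fun n =>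
    dd_bound (a := k ^ 2 - k ^ 2 * μ ^ (2 * n)) (by have := ht1 n; nlinarith)
      (by have := mul_pos hk2 (ht0 n); linarith) hk rfl
  refine pair_mem A hA d d' (fun n => ((bw μ k 1 n : ℝ) : ℂ))
    (fun n => ((bw μ k (-k ^ 2) n : ℝ) : ℂ)) (V * dg (fun n => ((bw μ k 1 n : ℝ) : ℂ)))
    (V * dg (fun n => ((bw μ k (-k ^ 2) n : ℝ) : ℂ)))
    ((1 + k ^ 2 - ε) / (1 + k ^ 2)) (div_nonneg (by linarith) h1.le)
    ((div_lt_one h1).2 (by linarith)) ?_ ?_ hd' ?_ ?_ ?_ ?_ (h 0 1) ?_ ?_ ?_ ?_ K K' hK.2 hK'.2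
  · have : (k ^ 2 + μ ^ (2 * 0)) / (1 + k ^ 2) = 1 := by
      rw [div_eq_one_iff_eq h1.ne']; simp; ring
    simp only [d, this, Complex.ofReal_one]
  · intro n hn
    exact dd_bound (a := k ^ 2 + μ ^ (2 * n)) (by have := ht0 n; linarith)
      (by have := ht2 n hn; linarith) hk rfl
  · simp [d']
  · intro n hn
    have e : 1 - d' n = ((1 - (k ^ 2 - k ^ 2 * μ ^ (2 * n)) / (1 + k ^ 2) : ℝ) : ℂ) := by
      simp only [d']; push_cast; ring
    rw [e]
    refine dd_bound (a := 1 + k ^ 2 * μ ^ (2 * n)) (by have := ht0 n; positivity)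
      (by have := ht2 n hn; nlinarith) hk ?_
    field_simp; ring
  · intro n
    have e : 1 - d n = ((1 - (k ^ 2 + μ ^ (2 * n)) / (1 + k ^ 2) : ℝ) : ℂ) := by
      simp only [d]; push_cast; ring
    rw [e]
    refine dd_bound (a := 1 - μ ^ (2 * n)) (by have := ht1 n; linarith)
      (by have := ht0 n; linarith) hk ?_
    field_simp; ring
  · have hX := A.smul_mem (h 0 0) ((1 / (1 + k ^ 2) : ℝ) : ℂ)
    have e1 : dg d = ((1 / (1 + k ^ 2) : ℝ) : ℂ) • GG μ k 1 0 0 := by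
      apply clm_ext; intro n
      show _ = ((1 / (1 + k ^ 2) : ℝ) : ℂ) • (dg (fun n => ((k ^ 2 + 1 * (1 * μ ^ (2 * n)) : ℝ) : ℂ)) (bv n))
      rw [dg_bv hdb, dg_bv hC1, smul_smul]
      congr 1
      simp only [d]; push_cast; ring
    have e2 : dg d' = ((1 / (1 + k ^ 2) : ℝ) : ℂ) • GG μ k (-k ^ 2) 0 0 := by
      apply clm_ext; intro n
      show _ = ((1 / (1 + k ^ 2) : ℝ) : ℂ) • (dg (fun n => ((k ^ 2 + 1 * (-k ^ 2 * μ ^ (2 * n)) : ℝ) : ℂ)) (bv n))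
      rw [dg_bv hd', dg_bv hC2, smul_smul]
      congr 1
      simp only [d']; push_cast; ring
    rw [e1, e2]
    exact hX
  · intro n
    rw [mapp, dg_bv hC, map_smul, V_bv]
  · intro n
    exact_mod_cast (bw_pos_p hμ hμ1 hk n).ne'
  · intro n
    rw [mapp, dg_bv hC', map_smul, V_bv]
  · intro n
    exact_mod_cast (bw_pos_m hμ hμ1 hk n).ne'

lemma V_mem {μ k : ℝ} (hμ : 0 < μ) (hμ1 : μ < 1) (hk : 0 < k)
    (A : StarSubalgebra ℂ (BB × BB))
    (h : ∀ i j, (GG μ k 1 i j, GG μ k (-k ^ 2) i j) ∈ A)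
    (hK : ∀ K ∈ compactOps Hnat, ∀ K' ∈ compactOps Hnat, (K, K') ∈ A) : (V, V) ∈ A := by
  have hc : ∀ l : ℝ, GG μ k l 0 1 - (k : ℂ) • V ∈ compactOps Hnat := by
    intro l
    have := GG_R hμ hμ1 hk l 0 1
    have e : symb k 0 1 = (k : ℂ) • zc := rfl
    rw [e, mem_R, toep_smul, toep_zc] at this
    exact this
  have h1 := sub_mem (h 0 1) (hK _ (hc 1) _ (hc (-k ^ 2)))
  rw [Prod.mk_sub_mk, sub_sub_cancel, sub_sub_cancel] at h1
  have h2 := A.smul_mem h1 (k : ℂ)⁻¹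
  have hkC : (k : ℂ) ≠ 0 := by exact_mod_cast hk.ne'
  rw [Prod.smul_mk, smul_smul, inv_mul_cancel₀ hkC, one_smul] at h2
  exact h2

lemma main (q : ℝ) (hq : 1 < q) (c : ℝ) (hc : 0 < c)
    (x : Fin 2 → (HC →L[ℂ] HC)) (hx : IsXPair q c x) :
    ∃ φ : (Cqc x) →⋆ₐ[ℂ] C(Circle, ℂ),
      Function.Surjective φ ∧
      Nonempty ((starAlgHomKer φ) ≃⋆ₐ[ℂ] (↥(compactOps Hnat) × ↥(compactOps Hnat))) := by
  have hμ : 0 < q⁻¹ := by positivity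
  have hμ1 : q⁻¹ < 1 := inv_lt_one_of_one_lt₀ hq
  have hk : 0 < Real.sqrt c := Real.sqrt_pos.2 hc
  obtain ⟨w, hw⟩ := exists_Wp hμ hμ1 hk
  obtain ⟨w', hw'⟩ := exists_Wm hμ hμ1 hk
  let J : Bool → ℤ → (Hnat →L[ℂ] HC) := fun s m => cond s (JJ hw m) (JJ hw' m)
  let G : Bool → Fin 2 → Fin 2 → BB := fun s i j =>
    cond s (GG q⁻¹ (Real.sqrt c) 1 i j) (GG q⁻¹ (Real.sqrt c) (-(Real.sqrt c) ^ 2) i j)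
  have hJ : ∀ s m, adjoint (J s m) ∘L J s m = 1 := by
    intro s m
    cases s
    · exact adj_JJ hw' m
    · exact adj_JJ hw m
  have hG : ∀ s m i j, (star (x i) * x j) ∘L J s m = J s m ∘L G s i j := by
    intro s m i j
    cases s
    · exact JJ_g hq hc hx hw' m i j
    · exact JJ_g hq hc hx hw m i j
  have ht : ∀ u : HC, (∀ s m n, inner ℂ (J s m (bv n)) u = 0) → u = 0 := fun u hu =>
    JJ_total hμ hμ1 hk hw hw' u (hu true) (hu false)
  have hle := Cqc_le hJ G hG
  let ψ : Cqc x →⋆ₐ[ℂ] BB × BB := psi hJ hle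
  have hinj : Function.Injective ψ := psi_inj hJ hle ht
  have hC : IsClosed (Cqc x : Set (HC →L[ℂ] HC)) := StarSubalgebra.isClosed_topologicalClosure _
  have hψg : ∀ i j, ∀ h : star (x i) * x j ∈ Cqc x, ψ ⟨_, h⟩ =
      (GG q⁻¹ (Real.sqrt c) 1 i j, GG q⁻¹ (Real.sqrt c) (-(Real.sqrt c) ^ 2) i j) := by
    intro i j h
    exact Prod.ext (PP_eq (hJ true 0) (hG true 0 i j)) (PP_eq (hJ false 0) (hG false 0 i j))
  have hsym := symbol_exists ψ hinj (by
    intro i j h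
    rw [hψg, mem_range_prQ]
    exact ⟨symb (Real.sqrt c) i j, GG_R hμ hμ1 hk _ i j, GG_R hμ hμ1 hk _ i j⟩)
  choose s hs using hsym
  have hA : IsClosed (ψ.range : Set (BB × BB)) := by
    have := psi_range_closed hC ψ hinj
    have e : (ψ.range : Set (BB × BB)) = Set.range ψ := rfl
    rw [e]; exact this
  have hgA : ∀ i j, (GG q⁻¹ (Real.sqrt c) 1 i j,
      GG q⁻¹ (Real.sqrt c) (-(Real.sqrt c) ^ 2) i j) ∈ ψ.range := by
    intro i j
    have hm : star (x i) * x j ∈ Cqc x :=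
      StarSubalgebra.le_topologicalClosure _ (StarAlgebra.subset_adjoin _ _ ⟨i, j, rfl⟩)
    exact ⟨⟨_, hm⟩, hψg i j hm⟩
  have hK := K_mem hμ hμ1 hk ψ.range hA hgA
  have hV := V_mem hμ hμ1 hk ψ.range hgA hK
  have hT := toep_pair_mem ψ.range hA hK hV
  exact ⟨phi ψ s hs, phi_surj hs (fun f => hT f),
    ⟨kequiv hs hinj (fun K h K' h' => hK K h K' h')⟩⟩

end Pod

/-- For all reals `q > 1` and `0 < c < ∞`, there is a surjective unital *-homomorphism
`φ` from `C_{q,c}` onto `C(𝕋)`, whose kernel is isomorphic, as a non-unital C*-algebra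
(via a *-algebra isomorphism), to `K(ℓ²(ℕ)) ⊕ K(ℓ²(ℕ))`.  Equivalently, there is a short
exact sequence `0 → K ⊕ K → C(S²_{μc}) → C(S¹) → 0`. -/
theorem stmt_3 (q : ℝ) (hq : 1 < q) (c : ℝ) (hc : 0 < c)
    (x : Fin 2 → (HC →L[ℂ] HC)) (hx : IsXPair q c x) :
    ∃ φ : (Cqc x) →⋆ₐ[ℂ] C(Circle, ℂ),
      Function.Surjective φ ∧
      Nonempty ((starAlgHomKer φ) ≃⋆ₐ[ℂ] (↥(compactOps Hnat) × ↥(compactOps Hnat))) := by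
  exact Pod.main q hq c hc x hx
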